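/- arXiv:math-ph/0412009 — 3 statements merged into one kernel-verified Lean document; each statement's English description precedes it below -/
import Mathlib

section
/- Stronger subadditivity of entropy (matrix case, Theorem 2): Let ρ₁₂₃ be a density matrix on H₁⊗H₂⊗H₃ and let K^1,…,K^M be operators on H₁⊗H₂ satisfying ∑_{α=1}^M K^{α*}K^α = id_{H₁⊗H₂}. Set n^α = Tr[(K^α⊗id₃) ρ₁₂₃ (K^{α*}⊗id₃)], and for each α with n^α > 0 set ρ₂₃^α = Tr₁[(K^α⊗id₃) ρ₁₂₃ (K^{α*}⊗id₃)]/n^α and ρ₂^α = Tr₃ ρ₂₃^α. Then S[ρ₁₂₃] − S[ρ₁₂] ≤ ∑_{α : n^α>0} n^α ( S[ρ₂₃^α] − S[ρ₂^α] ). -/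
open Matrix Kronecker Real
open scoped ComplexOrder

/-- Von Neumann entropy of a (Hermitian) matrix: the sum of `-λ ln λ` over its
eigenvalues, with the convention `0 ln 0 = 0`. -/
noncomputable def entropy {n : Type*} [Fintype n] [DecidableEq n]
    (A : Matrix n n ℂ) : ℝ :=
  if h : A.IsHermitian then ∑ i, Real.negMulLog (h.eigenvalues i) else 0

/-- Partial trace over the first factor of a twofold tensor product. -/
noncomputable def ptraceFst {m k : Type*} [Fintype m]
    (ρ : Matrix (m × k) (m × k) ℂ) : Matrix k k ℂ :=
  Matrix.of fun i j => ∑ a : m, ρ (a, i) (a, j)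

/-- Partial trace over the second factor of a twofold tensor product. -/
noncomputable def ptraceSnd {m k : Type*} [Fintype k]
    (ρ : Matrix (m × k) (m × k) ℂ) : Matrix m m ℂ :=
  Matrix.of fun i j => ∑ a : k, ρ (i, a) (j, a)

/-- Partial trace over the first factor of a threefold tensor product
(indexed as `(H₁ ⊗ H₂) ⊗ H₃`). -/
noncomputable def ptraceFst₃ {a b c : Type*} [Fintype a]
    (ρ : Matrix ((a × b) × c) ((a × b) × c) ℂ) : Matrix (b × c) (b × c) ℂ :=
  Matrix.of fun p q => ∑ i : a, ρ ((i, p.1), p.2) ((i, q.1), q.2)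

open Filter Topology

lemma entropy_of_diag {n : Type*} [Fintype n] [DecidableEq n] (A U : Matrix n n ℂ) (p : n → ℝ)
    (hU : Uᴴ * U = 1) (hA : A = U * diagonal (fun i => (p i : ℂ)) * Uᴴ) :
    entropy A = ∑ i, Real.negMulLog (p i) := by
  have hH : A.IsHermitian := by
    rw [hA, Matrix.IsHermitian, conjTranspose_mul, conjTranspose_mul, conjTranspose_conjTranspose,
      diagonal_conjTranspose, Matrix.mul_assoc]
    congr 3
    ext i
    simp
  rw [entropy, dif_pos hH]
  have h1 := hH.roots_charpoly_eq_eigenvalues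
  have h2 : A.charpoly = (diagonal (fun i => (p i : ℂ))).charpoly := by
    rw [hA, Matrix.charpoly_mul_comm, ← Matrix.mul_assoc, hU, Matrix.one_mul]
  have h4 : (∏ i, (Polynomial.X - Polynomial.C (p i : ℂ))) =
      ((Finset.univ.val.map (fun i => (p i : ℂ))).map
        (fun a => Polynomial.X - Polynomial.C a)).prod := by
    rw [Multiset.map_map]; rfl
  rw [h2, charpoly_diagonal, h4, Polynomial.roots_multiset_prod_X_sub_C] at h1
  have h3 := congrArg (fun s => (Multiset.map (fun z : ℂ => Real.negMulLog z.re) s).sum) h1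
  simp only [Multiset.map_map] at h3
  exact h3.symm

lemma exists_diag {n : Type*} [Fintype n] [DecidableEq n] (A : Matrix n n ℂ) (hA : A.PosSemidef) :
    ∃ (U : Matrix n n ℂ) (p : n → ℝ), Uᴴ * U = 1 ∧ U * Uᴴ = 1 ∧
      A = U * diagonal (fun i => (p i : ℂ)) * Uᴴ ∧ (∀ i, 0 ≤ p i) := by
  refine ⟨hA.isHermitian.eigenvectorUnitary, hA.isHermitian.eigenvalues, ?_, ?_, ?_,
    hA.eigenvalues_nonneg⟩
  · exact Unitary.coe_star_mul_self _
  · exact Unitary.coe_mul_star_self _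
  · conv_lhs => rw [hA.isHermitian.spectral_theorem]
    rw [Unitary.conjStarAlgAut_apply]
    rfl

lemma entropy_smul {n : Type*} [Fintype n] [DecidableEq n] (A : Matrix n n ℂ) (hA : A.PosSemidef)
    (c : ℝ) : entropy ((c : ℂ) • A) = c * entropy A + Real.negMulLog c * A.trace.re := by
  obtain ⟨U, p, h1, h2, h3, h4⟩ := exists_diag A hA
  have hs : (c : ℂ) • A = U * diagonal (fun i => ((c * p i : ℝ) : ℂ)) * Uᴴ := by
    have : diagonal (fun i => ((c * p i : ℝ) : ℂ)) = (c : ℂ) • diagonal (fun i => (p i : ℂ)) := by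
      ext i j
      by_cases h : i = j <;> simp [h, diagonal]
    rw [this, h3]; simp
  have ht : A.trace.re = ∑ i, p i := by
    rw [h3, trace_mul_comm, ← Matrix.mul_assoc, h1, Matrix.one_mul, trace_diagonal]
    simp
  rw [entropy_of_diag _ U _ h1 hs, entropy_of_diag A U p h1 h3, ht, Finset.mul_sum, Finset.mul_sum,
    ← Finset.sum_add_distrib]
  refine Finset.sum_congr rfl fun i _ => ?_
  rw [Real.negMulLog_mul]; ring

noncomputable def Gf {n : Type*} [Fintype n] (A B X : Matrix n n ℂ) (t : ℝ) : ℝ :=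
  2 * (Xᴴ * A).trace.re - (Xᴴ * B * X).trace.re - t * (X * A * Xᴴ).trace.re

lemma Gf_schwarz {d m κ : Type*} [Fintype d] [Fintype m] [Fintype κ] [DecidableEq d]
    (ρ σ : Matrix d d ℂ) (hρ : ρ.PosSemidef) (hσ : σ.PosSemidef) (L : κ → Matrix m d ℂ)
    (hL : ∑ k, (L k)ᴴ * L k = 1) (X : κ → Matrix m m ℂ) (t : ℝ) (ht : 0 ≤ t) :
    ∑ k, Gf (L k * ρ * (L k)ᴴ) (L k * σ * (L k)ᴴ) (X k) t ≤
      Gf ρ σ (∑ k, (L k)ᴴ * X k * L k) t := by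
  set Y := ∑ k, (L k)ᴴ * X k * L k with hY
  have hYH : Yᴴ = ∑ k, (L k)ᴴ * (X k)ᴴ * L k := by
    simp [hY, conjTranspose_sum, Matrix.mul_assoc]
  have e1 : ∑ k, ((X k)ᴴ * (L k * ρ * (L k)ᴴ)).trace = (Yᴴ * ρ).trace := by
    rw [hYH, Finset.sum_mul, trace_sum]
    refine Finset.sum_congr rfl fun k _ => ?_
    rw [← Matrix.mul_assoc (X k)ᴴ, trace_mul_comm _ (L k)ᴴ]
    simp only [Matrix.mul_assoc]
  have e2 : 0 ≤ ∑ k, ((X k)ᴴ * (L k * σ * (L k)ᴴ) * X k).trace - (Yᴴ * σ * Y).trace := by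
    have h : 0 ≤ ∑ k, (((L k)ᴴ * X k - Y * (L k)ᴴ)ᴴ * σ * ((L k)ᴴ * X k - Y * (L k)ᴴ)).trace :=
      Finset.sum_nonneg fun k _ => (hσ.conjTranspose_mul_mul_same _).trace_nonneg
    have a1 : ∑ k, ((X k)ᴴ * L k * σ * (Y * (L k)ᴴ)).trace = (Yᴴ * σ * Y).trace := by
      rw [hYH, Finset.sum_mul, Finset.sum_mul, trace_sum]
      refine Finset.sum_congr rfl fun k _ => ?_
      rw [← Matrix.mul_assoc, trace_mul_comm]
      simp only [Matrix.mul_assoc]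
    have a2 : ∑ k, (L k * Yᴴ * σ * ((L k)ᴴ * X k)).trace = (Yᴴ * σ * Y).trace := by
      rw [hY, Finset.mul_sum, trace_sum]
      refine Finset.sum_congr rfl fun k _ => ?_
      rw [Matrix.mul_assoc, Matrix.mul_assoc, trace_mul_comm]
      simp only [Matrix.mul_assoc]
    have a3 : ∑ k, (L k * Yᴴ * σ * (Y * (L k)ᴴ)).trace = (Yᴴ * σ * Y).trace := by
      have : (Yᴴ * σ * Y).trace = (Yᴴ * σ * Y * ∑ k, (L k)ᴴ * L k).trace := by
        rw [hL, Matrix.mul_one]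
      rw [this, Finset.mul_sum, trace_sum]
      refine Finset.sum_congr rfl fun k _ => ?_
      rw [Matrix.mul_assoc, Matrix.mul_assoc, trace_mul_comm]
      simp only [Matrix.mul_assoc]
    have a0 : ∀ k, (((L k)ᴴ * X k - Y * (L k)ᴴ)ᴴ * σ * ((L k)ᴴ * X k - Y * (L k)ᴴ)).trace =
        ((X k)ᴴ * (L k * σ * (L k)ᴴ) * X k).trace - ((X k)ᴴ * L k * σ * (Y * (L k)ᴴ)).trace
        - (L k * Yᴴ * σ * ((L k)ᴴ * X k)).trace + (L k * Yᴴ * σ * (Y * (L k)ᴴ)).trace := by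
      intro k
      simp only [conjTranspose_sub, conjTranspose_mul, conjTranspose_conjTranspose, Matrix.sub_mul,
        Matrix.mul_sub, trace_sub, Matrix.mul_assoc]
      ring
    simp only [a0, Finset.sum_add_distrib, Finset.sum_sub_distrib, a1, a2, a3] at h
    convert h using 1; ring
  have e3 : 0 ≤ ∑ k, (X k * (L k * ρ * (L k)ᴴ) * (X k)ᴴ).trace - (Y * ρ * Yᴴ).trace := by
    have h : 0 ≤ ∑ k, ((X k * L k - L k * Y) * ρ * (X k * L k - L k * Y)ᴴ).trace :=
      Finset.sum_nonneg fun k _ => (hρ.mul_mul_conjTranspose_same _).trace_nonneg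
    have a1 : ∑ k, (X k * L k * ρ * (Yᴴ * (L k)ᴴ)).trace = (Y * ρ * Yᴴ).trace := by
      conv_rhs => rw [hY, Finset.sum_mul, Finset.sum_mul, trace_sum]
      refine Finset.sum_congr rfl fun k _ => ?_
      rw [← Matrix.mul_assoc, trace_mul_comm, ← hY]
      simp only [Matrix.mul_assoc]
    have a2 : ∑ k, (L k * Y * ρ * ((L k)ᴴ * (X k)ᴴ)).trace = (Y * ρ * Yᴴ).trace := by
      rw [hYH, Finset.mul_sum, trace_sum]
      refine Finset.sum_congr rfl fun k _ => ?_
      rw [Matrix.mul_assoc, Matrix.mul_assoc, trace_mul_comm]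
      simp only [Matrix.mul_assoc]
    have a3 : ∑ k, (L k * Y * ρ * (Yᴴ * (L k)ᴴ)).trace = (Y * ρ * Yᴴ).trace := by
      have : (Y * ρ * Yᴴ).trace = (Y * ρ * Yᴴ * ∑ k, (L k)ᴴ * L k).trace := by
        rw [hL, Matrix.mul_one]
      rw [this, Finset.mul_sum, trace_sum]
      refine Finset.sum_congr rfl fun k _ => ?_
      rw [Matrix.mul_assoc, Matrix.mul_assoc, trace_mul_comm]
      simp only [Matrix.mul_assoc]
    have a0 : ∀ k, ((X k * L k - L k * Y) * ρ * (X k * L k - L k * Y)ᴴ).trace =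
        (X k * (L k * ρ * (L k)ᴴ) * (X k)ᴴ).trace - (X k * L k * ρ * (Yᴴ * (L k)ᴴ)).trace
        - (L k * Y * ρ * ((L k)ᴴ * (X k)ᴴ)).trace + (L k * Y * ρ * (Yᴴ * (L k)ᴴ)).trace := by
      intro k
      simp only [conjTranspose_sub, conjTranspose_mul, Matrix.sub_mul,
        Matrix.mul_sub, trace_sub, Matrix.mul_assoc]
      ring
    simp only [a0, Finset.sum_add_distrib, Finset.sum_sub_distrib, a1, a2, a3] at h
    convert h using 1; ring
  have e1' := congrArg Complex.re e1
  have e2' := (Complex.le_def.1 e2).1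
  have e3' := (Complex.le_def.1 e3).1
  simp only [Complex.re_sum, Complex.sub_re, Complex.zero_re] at e1' e2' e3'
  unfold Gf
  rw [Finset.sum_sub_distrib, Finset.sum_sub_distrib, ← Finset.mul_sum, ← Finset.mul_sum, e1']
  nlinarith

lemma Gf_eq {n : Type*} [Fintype n] [DecidableEq n] (U V Z : Matrix n n ℂ) (p q : n → ℝ) (t : ℝ)
    (hU : Uᴴ * U = 1) (hV : Vᴴ * V = 1) :
    Gf (U * diagonal (fun i => (p i : ℂ)) * Uᴴ) (V * diagonal (fun i => (q i : ℂ)) * Vᴴ)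
      (V * Z * Uᴴ) t = ∑ j, ∑ i, (2 * ((star (Z j i) * (Vᴴ * U) j i).re * p i) -
        (q j + t * p i) * Complex.normSq (Z j i)) := by
  have cU : ∀ M : Matrix n n ℂ, Uᴴ * (U * M) = M := fun M => by
    rw [← Matrix.mul_assoc, hU, Matrix.one_mul]
  have cV : ∀ M : Matrix n n ℂ, Vᴴ * (V * M) = M := fun M => by
    rw [← Matrix.mul_assoc, hV, Matrix.one_mul]
  have h1 : ((V * Z * Uᴴ)ᴴ * (U * diagonal (fun i => (p i : ℂ)) * Uᴴ)).trace =
      ∑ j, ∑ i, star (Z j i) * (Vᴴ * U) j i * p i := by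
    have : ((V * Z * Uᴴ)ᴴ * (U * diagonal (fun i => (p i : ℂ)) * Uᴴ)).trace =
        (Zᴴ * ((Vᴴ * U) * diagonal (fun i => (p i : ℂ)))).trace := by
      simp only [conjTranspose_mul, conjTranspose_conjTranspose, Matrix.mul_assoc]
      rw [trace_mul_comm]
      simp only [Matrix.mul_assoc, hU, Matrix.mul_one]
    rw [this, trace, Finset.sum_comm]
    refine Finset.sum_congr rfl fun i _ => ?_
    rw [diag_apply, Matrix.mul_apply]
    refine Finset.sum_congr rfl fun j _ => ?_
    rw [mul_diagonal, conjTranspose_apply, mul_assoc]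
  have h2 : ((V * Z * Uᴴ)ᴴ * (V * diagonal (fun i => (q i : ℂ)) * Vᴴ) * (V * Z * Uᴴ)).trace =
      ∑ j, ∑ i, star (Z j i) * (q j * Z j i) := by
    have : ((V * Z * Uᴴ)ᴴ * (V * diagonal (fun i => (q i : ℂ)) * Vᴴ) * (V * Z * Uᴴ)).trace =
        (Zᴴ * (diagonal (fun i => (q i : ℂ)) * Z)).trace := by
      simp only [conjTranspose_mul, conjTranspose_conjTranspose, Matrix.mul_assoc]
      rw [trace_mul_comm]
      simp only [Matrix.mul_assoc, hU, cV, Matrix.mul_one]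
    rw [this, trace, Finset.sum_comm]
    refine Finset.sum_congr rfl fun i _ => ?_
    rw [diag_apply, Matrix.mul_apply]
    refine Finset.sum_congr rfl fun j _ => ?_
    rw [diagonal_mul, conjTranspose_apply]
  have h3 : ((V * Z * Uᴴ) * (U * diagonal (fun i => (p i : ℂ)) * Uᴴ) * (V * Z * Uᴴ)ᴴ).trace =
      ∑ j, ∑ i, Z j i * (p i * star (Z j i)) := by
    have : ((V * Z * Uᴴ) * (U * diagonal (fun i => (p i : ℂ)) * Uᴴ) * (V * Z * Uᴴ)ᴴ).trace =
        (Z * (diagonal (fun i => (p i : ℂ)) * Zᴴ)).trace := by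
      simp only [conjTranspose_mul, conjTranspose_conjTranspose, Matrix.mul_assoc]
      rw [trace_mul_comm]
      simp only [Matrix.mul_assoc, hV, cU, Matrix.mul_one]
    rw [this, trace]
    refine Finset.sum_congr rfl fun i _ => ?_
    rw [diag_apply, Matrix.mul_apply]
    refine Finset.sum_congr rfl fun j _ => ?_
    rw [diagonal_mul, conjTranspose_apply]
  rw [Gf, h1, h2, h3]
  simp only [Complex.re_sum, Finset.mul_sum, ← Finset.sum_sub_distrib]
  refine Finset.sum_congr rfl fun j _ => Finset.sum_congr rfl fun i _ => ?_
  simp [Complex.normSq_apply]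
  ring

lemma ptraceSnd_conj {m d c : Type*} [Fintype m] [Fintype d] [Fintype c] [DecidableEq c]
    (L : Matrix m d ℂ) (A : Matrix (d × c) (d × c) ℂ) :
    ptraceSnd ((L ⊗ₖ (1 : Matrix c c ℂ)) * A * (Lᴴ ⊗ₖ (1 : Matrix c c ℂ))) =
      L * ptraceSnd A * Lᴴ := by
  ext i j
  simp only [ptraceSnd, of_apply, Matrix.mul_apply, kroneckerMap_apply, Fintype.sum_prod_type,
    Matrix.one_apply, mul_ite, ite_mul, mul_one, mul_zero, zero_mul, Finset.sum_ite_eq,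
    Finset.sum_ite_eq', Finset.mem_univ, if_true, Finset.sum_mul, Finset.mul_sum]
  rw [Finset.sum_comm]
  refine Finset.sum_congr rfl fun x _ => ?_
  rw [Finset.sum_comm]

lemma ptraceSnd_posSemidef {d c : Type*} [Fintype d] [Fintype c]
    (A : Matrix (d × c) (d × c) ℂ) (hA : A.PosSemidef) : (ptraceSnd A).PosSemidef := by
  have : ptraceSnd A = ∑ a : c, A.submatrix (fun i => (i, a)) (fun i => (i, a)) := by
    ext i j
    simp [ptraceSnd, Matrix.sum_apply]
  rw [this]
  exact posSemidef_sum _ fun a _ => hA.submatrix _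

lemma ptraceSnd_trace {d c : Type*} [Fintype d] [Fintype c]
    (A : Matrix (d × c) (d × c) ℂ) : (ptraceSnd A).trace = A.trace := by
  simp [ptraceSnd, trace, Fintype.sum_prod_type]

lemma quad_le (z w : ℂ) (p r : ℝ) (h : 0 < r ∨ (r = 0 ∧ p = 0)) :
    2 * ((star z * w).re * p) - r * Complex.normSq z ≤ Complex.normSq w * (p ^ 2 / r) := by
  rcases h with h | ⟨h, h'⟩
  · rw [← mul_div_assoc, le_div_iff₀ h]
    simp only [Complex.normSq_apply, Complex.mul_re, Complex.star_def, Complex.conj_re,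
      Complex.conj_im]
    nlinarith [sq_nonneg (r * z.re - p * w.re), sq_nonneg (r * z.im - p * w.im)]
  · simp [h, h']

lemma quad_eq (w : ℂ) (p r : ℝ) (h : 0 < r ∨ (r = 0 ∧ p = 0)) :
    2 * ((star (w * ((p / r : ℝ) : ℂ)) * w).re * p) -
      r * Complex.normSq (w * ((p / r : ℝ) : ℂ)) = Complex.normSq w * (p ^ 2 / r) := by
  rcases h with h | ⟨h, h'⟩
  · simp [Complex.normSq_apply, -Complex.ofReal_div]
    field_simp
    ring
  · simp [h, h']

lemma package {m c : Type*} [Fintype m] [Fintype c] [DecidableEq m] [DecidableEq c]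
    (A : Matrix (m × c) (m × c) ℂ) (hA : A.PosSemidef) :
    ∃ J H : ℝ → ℝ, (∀ t, 0 < t → HasDerivAt J (H t) t) ∧
      (∀ t, 0 < t → ∀ X, Gf A (ptraceSnd A ⊗ₖ (1 : Matrix c c ℂ)) X t ≤ H t) ∧
      (∀ t, 0 < t → ∃ X, Gf A (ptraceSnd A ⊗ₖ (1 : Matrix c c ℂ)) X t = H t) ∧
      Tendsto (fun t => J t - A.trace.re * Real.log t) atTop (𝓝 (-entropy A)) ∧
      Tendsto J (𝓝[>] 0) (𝓝 (-entropy (ptraceSnd A))) := by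
  obtain ⟨U, p, hU, hU', hAU, hp⟩ := exists_diag A hA
  obtain ⟨g, q, hg, hg', hAg, hq⟩ := exists_diag _ (ptraceSnd_posSemidef A hA)
  set V : Matrix (m × c) (m × c) ℂ := g ⊗ₖ (1 : Matrix c c ℂ) with hVdef
  have hVH : Vᴴ = gᴴ ⊗ₖ (1 : Matrix c c ℂ) := by
    rw [hVdef, conjTranspose_kronecker, conjTranspose_one]
  have hV : Vᴴ * V = 1 := by
    rw [hVH, hVdef, ← mul_kronecker_mul, hg, Matrix.one_mul, one_kronecker_one]
  have hV' : V * Vᴴ = 1 := by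
    rw [hVH, hVdef, ← mul_kronecker_mul, hg', Matrix.one_mul, one_kronecker_one]
  have hB : ptraceSnd A ⊗ₖ (1 : Matrix c c ℂ) =
      V * diagonal (fun x : m × c => (q x.1 : ℂ)) * Vᴴ := by
    have : diagonal (fun x : m × c => (q x.1 : ℂ)) =
        diagonal (fun j => (q j : ℂ)) ⊗ₖ (1 : Matrix c c ℂ) := by
      rw [← diagonal_one, diagonal_kronecker_diagonal]; simp
    rw [this, hVH, hVdef, ← mul_kronecker_mul, ← mul_kronecker_mul, Matrix.one_mul, Matrix.one_mul]
    exact congrArg (fun M => M ⊗ₖ (1 : Matrix c c ℂ)) hAg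
  set W := Vᴴ * U with hW
  have hWW : Wᴴ * W = 1 := by
    rw [hW, conjTranspose_mul, conjTranspose_conjTranspose, Matrix.mul_assoc,
      ← Matrix.mul_assoc V, hV', Matrix.one_mul, hU]
  have hcol : ∀ i, ∑ x, Complex.normSq (W x i) = 1 := by
    intro i
    have h := congrFun (congrFun hWW i) i
    rw [Matrix.mul_apply, one_apply_eq] at h
    have h' := congrArg Complex.re h
    simpa [Complex.normSq_apply] using h'
  have hrow : ∀ j, ∑ a : c, ∑ i, Complex.normSq (W (j, a) i) * p i = q j := by
    intro j
    have h1 : ptraceSnd (Vᴴ * A * V) = diagonal (fun j => (q j : ℂ)) := by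
      have h := ptraceSnd_conj gᴴ A
      rw [conjTranspose_conjTranspose, ← hVH, ← hVdef] at h
      rw [h, hAg, Matrix.mul_assoc, Matrix.mul_assoc, Matrix.mul_assoc, hg, Matrix.mul_one,
        ← Matrix.mul_assoc, hg, Matrix.one_mul]
    have h2 : Vᴴ * A * V = W * diagonal (fun i => (p i : ℂ)) * Wᴴ := by
      rw [hW, hAU, conjTranspose_mul, conjTranspose_conjTranspose]
      simp only [Matrix.mul_assoc]
    rw [h2] at h1
    have h := congrFun (congrFun h1 j) j
    rw [diagonal_apply_eq, ptraceSnd, of_apply] at h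
    have h' := congrArg Complex.re h
    rw [Complex.ofReal_re, Complex.re_sum] at h'
    rw [← h']
    refine Finset.sum_congr rfl fun a _ => ?_
    rw [Matrix.mul_apply, Complex.re_sum]
    refine Finset.sum_congr rfl fun i _ => ?_
    rw [mul_diagonal, conjTranspose_apply]
    simp [Complex.normSq_apply]
    ring
  have hnn : ∀ x i, 0 ≤ Complex.normSq (W x i) * p i := fun x i =>
    mul_nonneg (Complex.normSq_nonneg _) (hp i)
  have hsupp : ∀ x : m × c, q x.1 = 0 → ∀ i, Complex.normSq (W x i) * p i = 0 := by
    intro x hx i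
    have h := hrow x.1
    rw [hx, Finset.sum_eq_zero_iff_of_nonneg
      (fun a _ => Finset.sum_nonneg fun i _ => hnn _ _)] at h
    have h2 := h x.2 (Finset.mem_univ _)
    rw [Finset.sum_eq_zero_iff_of_nonneg (fun i _ => hnn _ _)] at h2
    exact h2 i (Finset.mem_univ _)
  have htr : A.trace.re = ∑ x, ∑ i, Complex.normSq (W x i) * p i := by
    have ht : A.trace.re = ∑ i, p i := by
      rw [hAU, trace_mul_comm, ← Matrix.mul_assoc, hU, Matrix.one_mul, trace_diagonal]
      simp
    rw [ht, Finset.sum_comm]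
    refine Finset.sum_congr rfl fun i _ => ?_
    rw [← Finset.sum_mul, hcol, one_mul]
  have hr : ∀ t : ℝ, 0 < t → ∀ (x : m × c) i, 0 < q x.1 + t * p i ∨
      (q x.1 + t * p i = 0 ∧ p i = 0) := by
    intro t ht x i
    rcases (hp i).eq_or_lt with h | h
    · rcases (hq x.1).eq_or_lt with h' | h'
      · right; simp [← h, ← h']
      · left; simpa [← h] using h'
    · left
      have := mul_pos ht h
      linarith [hq x.1]
  refine ⟨fun t => ∑ x : m × c, ∑ i,
      Complex.normSq (W x i) * (p i * Real.log (q x.1 + t * p i)),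
    fun t => ∑ x : m × c, ∑ i, Complex.normSq (W x i) * (p i ^ 2 / (q x.1 + t * p i)),
    ?_, ?_, ?_, ?_, ?_⟩
  · intro t ht
    refine HasDerivAt.fun_sum fun x _ => HasDerivAt.fun_sum fun i _ => ?_
    refine HasDerivAt.const_mul _ ?_
    rcases (hp i).eq_or_lt with h | h
    · simp only [← h, zero_mul]
      simpa using hasDerivAt_const t (0 : ℝ)
    · have hpos : 0 < q x.1 + t * p i := by
        have := mul_pos ht h
        linarith [hq x.1]
      have h1 : HasDerivAt (fun t => q x.1 + t * p i) (p i) t := by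
        simpa using ((hasDerivAt_id t).mul_const (p i)).const_add (q x.1)
      have h2 := (h1.log hpos.ne').const_mul (p i)
      convert h2 using 1
      ring
  · intro t ht X
    have hX : X = V * (Vᴴ * X * U) * Uᴴ := by
      simp only [Matrix.mul_assoc, hU', Matrix.mul_one]
      rw [← Matrix.mul_assoc, hV', Matrix.one_mul]
    rw [hX, hB]
    conv_lhs => rw [hAU]
    rw [Gf_eq U V _ p (fun x => q x.1) t hU hV]
    exact Finset.sum_le_sum fun x _ => Finset.sum_le_sum fun i _ => quad_le _ _ _ _ (hr t ht x i)
  · intro t ht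
    refine ⟨V * (of fun x i => W x i * ((p i / (q x.1 + t * p i) : ℝ) : ℂ)) * Uᴴ, ?_⟩
    rw [hB]
    conv_lhs => rw [hAU]
    rw [Gf_eq U V _ p (fun x => q x.1) t hU hV]
    exact Finset.sum_congr rfl fun x _ => Finset.sum_congr rfl fun i _ =>
      quad_eq _ _ _ (hr t ht x i)
  · have hS : -entropy A = ∑ x : m × c, ∑ i, Complex.normSq (W x i) * (p i * Real.log (p i)) := by
      rw [entropy_of_diag A U p hU hAU, Finset.sum_comm, ← Finset.sum_neg_distrib]
      refine Finset.sum_congr rfl fun i _ => ?_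
      rw [← Finset.sum_mul, hcol, one_mul, Real.negMulLog]; ring
    have hlim : Tendsto (fun t : ℝ => ∑ x : m × c, ∑ i,
        Complex.normSq (W x i) * (p i * Real.log (q x.1 / t + p i))) atTop (𝓝 (-entropy A)) := by
      rw [hS]
      refine tendsto_finsetSum _ fun x _ => tendsto_finsetSum _ fun i _ => ?_
      refine Tendsto.const_mul _ ?_
      rcases (hp i).eq_or_lt with h | h
      · simp [← h]
      · refine Tendsto.const_mul _ ?_
        have h1 : Tendsto (fun t : ℝ => q x.1 / t + p i) atTop (𝓝 (0 + p i)) :=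
          (tendsto_const_nhds.div_atTop tendsto_id).add_const _
        rw [zero_add] at h1
        exact h1.log h.ne'
    refine hlim.congr' ?_
    filter_upwards [eventually_gt_atTop 0] with t ht
    rw [htr, Finset.sum_mul, ← Finset.sum_sub_distrib]
    refine Finset.sum_congr rfl fun x _ => ?_
    rw [Finset.sum_mul, ← Finset.sum_sub_distrib]
    refine Finset.sum_congr rfl fun i _ => ?_
    rcases (hp i).eq_or_lt with h | h
    · simp [← h]
    · have hpos : 0 < q x.1 + t * p i := by
        have := mul_pos ht h
        linarith [hq x.1]
      have : q x.1 / t + p i = (q x.1 + t * p i) / t := by field_simp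
      rw [this, Real.log_div hpos.ne' ht.ne']
      ring
  · have hS : -entropy (ptraceSnd A) =
        ∑ x : m × c, ∑ i, Complex.normSq (W x i) * (p i * Real.log (q x.1)) := by
      rw [entropy_of_diag _ g q hg hAg, Fintype.sum_prod_type, ← Finset.sum_neg_distrib]
      refine Finset.sum_congr rfl fun j _ => ?_
      simp only [← mul_assoc, ← Finset.sum_mul]
      rw [hrow, Real.negMulLog]; ring
    rw [hS]
    refine tendsto_finsetSum _ fun x _ => tendsto_finsetSum _ fun i _ => ?_
    simp only [← mul_assoc]
    rcases (hq x.1).eq_or_lt with h | h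
    · simp [hsupp x h.symm i]
    · refine Tendsto.const_mul _ ?_
      have h1 : Tendsto (fun t : ℝ => q x.1 + t * p i) (𝓝 0) (𝓝 (q x.1 + 0 * p i)) :=
        (Continuous.tendsto (by fun_prop) 0)
      rw [zero_mul, add_zero] at h1
      exact (h1.log h.ne').mono_left nhdsWithin_le_nhds

lemma Gf_sum {n κ : Type*} [Fintype n] (s : Finset κ) (A B : κ → Matrix n n ℂ)
    (X : Matrix n n ℂ) (t : ℝ) :
    Gf (∑ k ∈ s, A k) (∑ k ∈ s, B k) X t = ∑ k ∈ s, Gf (A k) (B k) X t := by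
  simp only [Gf, Finset.mul_sum, Finset.sum_mul, trace_sum, Complex.re_sum,
    Finset.sum_sub_distrib]

lemma kron_sum {m c κ : Type*} [Fintype c] [DecidableEq c] (s : Finset κ)
    (A : κ → Matrix m m ℂ) :
    (∑ k ∈ s, A k) ⊗ₖ (1 : Matrix c c ℂ) = ∑ k ∈ s, A k ⊗ₖ (1 : Matrix c c ℂ) := by
  ext i j
  simp [Matrix.sum_apply, kroneckerMap_apply, Finset.sum_mul]

lemma ptraceSnd_sum {m c κ : Type*} [Fintype c] (s : Finset κ)
    (A : κ → Matrix (m × c) (m × c) ℂ) :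
    ptraceSnd (∑ k ∈ s, A k) = ∑ k ∈ s, ptraceSnd (A k) := by
  ext i j
  simp only [ptraceSnd, of_apply, Matrix.sum_apply]
  exact Finset.sum_comm

lemma core {d m c ι κ : Type*} [Fintype d] [Fintype m] [Fintype c] [Fintype ι] [Fintype κ]
    [DecidableEq d] [DecidableEq m] [DecidableEq c]
    (ρ : Matrix (d × c) (d × c) ℂ) (hρ : ρ.PosSemidef) (L : ι → κ → Matrix m d ℂ)
    (hL : ∑ a, ∑ k, (L a k)ᴴ * L a k = 1) (A : ι → Matrix (m × c) (m × c) ℂ)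
    (hA : ∀ a, A a = ∑ k, (L a k ⊗ₖ (1 : Matrix c c ℂ)) * ρ * (L a k ⊗ₖ (1 : Matrix c c ℂ))ᴴ) :
    entropy ρ - entropy (ptraceSnd ρ) ≤
      ∑ a, (entropy (A a) - entropy (ptraceSnd (A a))) := by
  have hAp : ∀ a, (A a).PosSemidef := fun a => by
    rw [hA]
    exact posSemidef_sum _ fun k _ => hρ.mul_mul_conjTranspose_same _
  have hLk : ∑ x : ι × κ, (L x.1 x.2 ⊗ₖ (1 : Matrix c c ℂ))ᴴ * (L x.1 x.2 ⊗ₖ (1 : Matrix c c ℂ))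
      = 1 := by
    simp only [conjTranspose_kronecker, conjTranspose_one, ← mul_kronecker_mul, Matrix.one_mul]
    rw [← kron_sum, Fintype.sum_prod_type, hL, one_kronecker_one]
  have hAtr : ∑ a, (A a).trace.re = ρ.trace.re := by
    have : ∑ a, (A a).trace = ρ.trace := by
      rw [← Matrix.one_mul ρ, ← hLk, Finset.sum_mul, trace_sum, Fintype.sum_prod_type]
      refine Finset.sum_congr rfl fun a _ => ?_
      rw [hA, trace_sum]
      refine Finset.sum_congr rfl fun k _ => ?_
      rw [trace_mul_comm, Matrix.mul_assoc]
    rw [← this, Complex.re_sum]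
  have hB : ∀ a, ptraceSnd (A a) ⊗ₖ (1 : Matrix c c ℂ) = ∑ k, (L a k ⊗ₖ (1 : Matrix c c ℂ)) *
      (ptraceSnd ρ ⊗ₖ (1 : Matrix c c ℂ)) * (L a k ⊗ₖ (1 : Matrix c c ℂ))ᴴ := by
    intro a
    rw [hA, ptraceSnd_sum, kron_sum]
    refine Finset.sum_congr rfl fun k _ => ?_
    rw [conjTranspose_kronecker, conjTranspose_one, ptraceSnd_conj, ← mul_kronecker_mul,
      ← mul_kronecker_mul, Matrix.one_mul, Matrix.one_mul]
  obtain ⟨J, H, hJ, hle, -, hinf, h0⟩ := package ρ hρ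
  choose Ja Ha hJa _ hex hinfa h0a using fun a => package (A a) (hAp a)
  have hσ : (ptraceSnd ρ ⊗ₖ (1 : Matrix c c ℂ)).PosSemidef :=
    (ptraceSnd_posSemidef ρ hρ).kronecker PosSemidef.one
  have hineq : ∀ t, 0 < t → ∑ a, Ha a t ≤ H t := by
    intro t ht
    choose X hX using fun a => hex a t ht
    have h := Gf_schwarz ρ _ hρ hσ (fun x : ι × κ => L x.1 x.2 ⊗ₖ (1 : Matrix c c ℂ)) hLk
      (fun x => X x.1) t ht.le
    refine le_trans (le_of_eq ?_) (h.trans (hle t ht _))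
    rw [Fintype.sum_prod_type]
    refine Finset.sum_congr rfl fun a _ => ?_
    rw [← hX a, hB a]
    conv_lhs => rw [hA a]
    exact Gf_sum _ _ _ _ _
  have hD : ∀ t, 0 < t → HasDerivAt (fun t => J t - ∑ a, Ja a t) (H t - ∑ a, Ha a t) t :=
    fun t ht => (hJ t ht).sub (HasDerivAt.fun_sum fun a _ => hJa a t ht)
  have hmono : MonotoneOn (fun t => J t - ∑ a, Ja a t) (Set.Ioi 0) := by
    apply monotoneOn_of_deriv_nonneg (convex_Ioi 0)
    · exact fun t ht => (hD t ht).continuousAt.continuousWithinAt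
    · rw [interior_Ioi]
      exact fun t ht => (hD t ht).differentiableAt.differentiableWithinAt
    · rw [interior_Ioi]
      intro t ht
      rw [(hD t ht).deriv]
      linarith [hineq t ht]
  have l0 : Tendsto (fun t => J t - ∑ a, Ja a t) (𝓝[>] 0)
      (𝓝 (-entropy (ptraceSnd ρ) - ∑ a, -entropy (ptraceSnd (A a)))) :=
    h0.sub (tendsto_finsetSum _ fun a _ => h0a a)
  have linf : Tendsto (fun t => J t - ∑ a, Ja a t) atTop
      (𝓝 (-entropy ρ - ∑ a, -entropy (A a))) := by
    refine (hinf.sub (tendsto_finsetSum Finset.univ fun a _ => hinfa a)).congr fun t => ?_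
    rw [Finset.sum_sub_distrib, ← Finset.sum_mul, hAtr]
    ring
  have key : -entropy (ptraceSnd ρ) - ∑ a, -entropy (ptraceSnd (A a)) ≤
      -entropy ρ - ∑ a, -entropy (A a) := by
    have h1 : J 1 - ∑ a, Ja a 1 ≤ -entropy ρ - ∑ a, -entropy (A a) := by
      refine ge_of_tendsto linf ?_
      filter_upwards [eventually_ge_atTop 1] with t ht
      exact hmono (Set.mem_Ioi.2 one_pos) (Set.mem_Ioi.2 (by linarith)) ht
    have h2 : -entropy (ptraceSnd ρ) - ∑ a, -entropy (ptraceSnd (A a)) ≤ J 1 - ∑ a, Ja a 1 := by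
      refine le_of_tendsto l0 ?_
      filter_upwards [Ioo_mem_nhdsGT (one_pos : (0 : ℝ) < 1)] with t ht
      exact hmono (Set.mem_Ioi.2 ht.1) (Set.mem_Ioi.2 one_pos) ht.2.le
    exact h2.trans h1
  simp only [Finset.sum_neg_distrib, Finset.sum_sub_distrib] at key ⊢
  linarith

/-- **Stronger subadditivity of entropy, matrix case** (Theorem 2):
`S[ρ₁₂₃] − S[ρ₁₂] ≤ ∑_{α : n^α > 0} n^α (S[ρ₂₃^α] − S[ρ₂^α])`. -/
theorem stronger_subadditivity_matrix
    {n₁ n₂ n₃ : Type*} [Fintype n₁] [Fintype n₂] [Fintype n₃]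
    [DecidableEq n₁] [DecidableEq n₂] [DecidableEq n₃] {M : ℕ}
    (ρ : Matrix ((n₁ × n₂) × n₃) ((n₁ × n₂) × n₃) ℂ)
    (hρ : ρ.PosSemidef) (hρtr : ρ.trace = 1)
    (K : Fin M → Matrix (n₁ × n₂) (n₁ × n₂) ℂ)
    (hK : ∑ α, (K α)ᴴ * K α = 1)
    (n : Fin M → ℝ)
    (hn : ∀ α, n α =
      (((K α ⊗ₖ (1 : Matrix n₃ n₃ ℂ)) * ρ *
        ((K α)ᴴ ⊗ₖ (1 : Matrix n₃ n₃ ℂ))).trace).re)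
    (ρ23 : Fin M → Matrix (n₂ × n₃) (n₂ × n₃) ℂ)
    (hρ23 : ∀ α, 0 < n α → ρ23 α = ((n α : ℂ))⁻¹ •
      ptraceFst₃ ((K α ⊗ₖ (1 : Matrix n₃ n₃ ℂ)) * ρ *
        ((K α)ᴴ ⊗ₖ (1 : Matrix n₃ n₃ ℂ))))
    (ρ2 : Fin M → Matrix n₂ n₂ ℂ)
    (hρ2 : ∀ α, 0 < n α → ρ2 α = ptraceSnd (ρ23 α)) :
    entropy ρ - entropy (ptraceSnd ρ) ≤
      ∑ α ∈ Finset.univ.filter (fun α => 0 < n α),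
        n α * (entropy (ρ23 α) - entropy (ρ2 α)) := by
  classical
  set A : Fin M → Matrix (n₂ × n₃) (n₂ × n₃) ℂ := fun α =>
    ptraceFst₃ ((K α ⊗ₖ (1 : Matrix n₃ n₃ ℂ)) * ρ * ((K α)ᴴ ⊗ₖ (1 : Matrix n₃ n₃ ℂ))) with hAdef
  have hL : ∑ a, ∑ k : n₁, (of fun b x => K a (k, b) x : Matrix n₂ (n₁ × n₂) ℂ)ᴴ *
      (of fun b x => K a (k, b) x : Matrix n₂ (n₁ × n₂) ℂ) = 1 := by
    rw [← hK]
    refine Finset.sum_congr rfl fun a _ => ?_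
    ext x y
    simp [Matrix.sum_apply, Matrix.mul_apply, Fintype.sum_prod_type]
  have hA : ∀ a, A a = ∑ k : n₁,
      ((of fun b x => K a (k, b) x : Matrix n₂ (n₁ × n₂) ℂ) ⊗ₖ (1 : Matrix n₃ n₃ ℂ)) * ρ *
      ((of fun b x => K a (k, b) x : Matrix n₂ (n₁ × n₂) ℂ) ⊗ₖ (1 : Matrix n₃ n₃ ℂ))ᴴ := by
    intro a
    rw [hAdef]
    ext x y
    simp only [ptraceFst₃, of_apply, Matrix.sum_apply]
    refine Finset.sum_congr rfl fun k _ => ?_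
    rw [conjTranspose_kronecker, conjTranspose_one]
    rfl
  have hAp : ∀ a, (A a).PosSemidef := fun a => by
    rw [hA]
    exact posSemidef_sum _ fun k _ => hρ.mul_mul_conjTranspose_same _
  have htr : ∀ a, (A a).trace.re = n a := by
    intro a
    rw [hn, hAdef]
    congr 1
    simp only [trace, diag_apply, ptraceFst₃, of_apply, Fintype.sum_prod_type]
    conv_rhs => rw [Finset.sum_comm]
    exact Finset.sum_congr rfl fun b _ => Finset.sum_comm
  refine (core ρ hρ _ hL A hA).trans (le_of_eq ?_)
  rw [Finset.sum_filter]
  refine Finset.sum_congr rfl fun a _ => ?_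
  have hn0 : 0 ≤ n a := by
    rw [← htr]
    exact (Complex.le_def.1 (hAp a).trace_nonneg).1
  split_ifs with h
  · have h1 : A a = (n a : ℂ) • ρ23 a := by
      rw [hρ23 a h, smul_smul, mul_inv_cancel₀, one_smul]
      exact_mod_cast h.ne'
    have h23 : (ρ23 a).PosSemidef := by
      rw [hρ23 a h]
      refine (hAp a).smul ?_
      rw [← Complex.ofReal_inv]
      exact_mod_cast inv_nonneg.2 hn0
    have h2 : ptraceSnd (A a) = (n a : ℂ) • ρ2 a := by
      rw [hρ2 a h, h1]
      ext i j
      simp [ptraceSnd, Finset.mul_sum]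
    have h2p : (ρ2 a).PosSemidef := by
      rw [hρ2 a h]; exact ptraceSnd_posSemidef _ h23
    rw [h2, h1, entropy_smul _ h23, entropy_smul _ h2p, hρ2 a h, ptraceSnd_trace]
    ring
  · have hz : n a = 0 := le_antisymm (not_lt.1 h) hn0
    have h0 : A a = 0 := by
      rw [← (hAp a).trace_eq_zero_iff]
      apply Complex.ext
      · rw [htr, hz]; rfl
      · exact (Complex.le_def.1 (hAp a).trace_nonneg).2.symm
    have h1 : entropy (A a) = 0 := by
      have := entropy_smul (A a) (hAp a) 0
      simpa [h0] using this
    have h2 : entropy (ptraceSnd (A a)) = 0 := by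
      have := entropy_smul (ptraceSnd (A a)) (ptraceSnd_posSemidef _ (hAp a)) 0
      have hp0 : ptraceSnd (A a) = 0 := by
        ext i j; simp [h0, ptraceSnd]
      rw [hp0]
      simpa [hp0] using this
    rw [h1, h2, sub_zero]
end

section
/- Improved subadditivity (Corollary 4, finite case): Let ρ₁₂ be a density matrix on H₁⊗H₂ and let P^1,…,P^M be positive semidefinite operators on H₁ with ∑_{α=1}^M P^α = id_{H₁}. Set n^α = Tr[(P^α⊗id₂) ρ₁₂] and, for each α with n^α > 0, ρ₂^α = Tr₁[(P^α⊗id₂) ρ₁₂]/n^α. Then S[ρ₁₂] ≤ S[ρ₁] + ∑_{α : n^α>0} n^α S[ρ₂^α] ≤ S[ρ₁] + S[ρ₂]. -/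
open Matrix Kronecker Real
open scoped ComplexOrder

lemma aux_norm_exp_le {𝔸 : Type*} [NormedRing 𝔸] [NormedAlgebra ℝ 𝔸] [CompleteSpace 𝔸] [NormOneClass 𝔸]
    (x : 𝔸) : ‖NormedSpace.exp x‖ ≤ Real.exp ‖x‖ := by
  rw [NormedSpace.exp_eq_tsum ℝ, Real.exp_eq_exp_ℝ, NormedSpace.exp_eq_tsum ℝ]
  have h := NormedSpace.norm_expSeries_summable' (𝕂 := ℝ) x
  have h2 := NormedSpace.expSeries_summable' (𝕂 := ℝ) ‖x‖
  refine (norm_tsum_le_tsum_norm h).trans (h.tsum_le_tsum (fun n => ?_) h2)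
  rw [norm_smul, Real.norm_of_nonneg (by positivity), smul_eq_mul]
  gcongr
  exact norm_pow_le x n

lemma aux_pow_sub {𝔸 : Type*} [NormedRing 𝔸] [NormOneClass 𝔸] (X Y : 𝔸) (c : ℝ) (hX : ‖X‖ ≤ c)
    (hY : ‖Y‖ ≤ c) (n : ℕ) : c * ‖X ^ n - Y ^ n‖ ≤ n * (‖X - Y‖ * c ^ n) := by
  have hc : 0 ≤ c := (norm_nonneg X).trans hX
  induction n with
  | zero => simp
  | succ n ih =>
    have e : X ^ (n+1) - Y ^ (n+1) = X * (X ^ n - Y ^ n) + (X - Y) * Y ^ n := by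
      rw [pow_succ', pow_succ']; noncomm_ring
    have hYn : ‖Y ^ n‖ ≤ c ^ n := (norm_pow_le Y n).trans (by gcongr)
    calc c * ‖X ^ (n+1) - Y ^ (n+1)‖ ≤ c * (c * ‖X ^ n - Y ^ n‖ + ‖X - Y‖ * c ^ n) := by
          rw [e]
          gcongr
          refine (norm_add_le _ _).trans ?_
          gcongr
          · exact (norm_mul_le _ _).trans (by gcongr)
          · exact (norm_mul_le _ _).trans (by gcongr)
      _ = c * (c * ‖X ^ n - Y ^ n‖) + ‖X - Y‖ * c ^ (n+1) := by ring
      _ ≤ c * (n * (‖X - Y‖ * c ^ n)) + ‖X - Y‖ * c ^ (n+1) := by gcongr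
      _ = _ := by push_cast; ring

open Filter Topology in
lemma aux_lie_trotter {𝔸 : Type*} [NormedRing 𝔸] [NormedAlgebra ℝ 𝔸] [CompleteSpace 𝔸] [NormOneClass 𝔸]
    (A B : 𝔸) : Tendsto (fun n : ℕ => (NormedSpace.exp ((n:ℝ)⁻¹ • A) * NormedSpace.exp ((n:ℝ)⁻¹ • B)) ^ n)
      atTop (𝓝 (NormedSpace.exp (A + B))) := by
  have hd : HasDerivAt (fun t : ℝ => NormedSpace.exp (t • A) * NormedSpace.exp (t • B)
      - NormedSpace.exp (t • (A + B))) 0 0 := by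
    have h1 := hasDerivAt_exp_smul_const (𝕂 := ℝ) A (0:ℝ)
    have h2 := hasDerivAt_exp_smul_const (𝕂 := ℝ) B (0:ℝ)
    have h3 := hasDerivAt_exp_smul_const (𝕂 := ℝ) (A + B) (0:ℝ)
    have h4 := (h1.mul h2).sub h3
    simp only [zero_smul, NormedSpace.exp_zero, one_mul, mul_one, sub_self] at h4
    exact h4
  have ho := hd.tendsto_slope_zero
  have hinv : Tendsto (fun n : ℕ => ((n:ℝ))⁻¹) atTop (𝓝[≠] 0) := by
    refine tendsto_nhdsWithin_iff.2 ⟨tendsto_inv_atTop_nhds_zero_nat, ?_⟩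
    filter_upwards [eventually_gt_atTop 0] with n hn
    simp; omega
  have hl := (ho.comp hinv).norm
  simp only [Function.comp_def, zero_add, zero_smul, NormedSpace.exp_zero, mul_one, sub_self, sub_zero,
    norm_zero, inv_inv, norm_smul] at hl
  rw [tendsto_iff_norm_sub_tendsto_zero]
  have hl2 := hl.mul_const (Real.exp (‖A‖ + ‖B‖))
  rw [zero_mul] at hl2
  refine squeeze_zero' (Eventually.of_forall fun _ => norm_nonneg _) ?_ hl2
  filter_upwards [eventually_gt_atTop 0] with n hn
  have hn' : (0:ℝ) < n := by exact_mod_cast hn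
  have hY : NormedSpace.exp (A + B) = NormedSpace.exp ((n:ℝ)⁻¹ • (A + B)) ^ n := by
    let _ : NormedAlgebra ℚ 𝔸 := NormedAlgebra.restrictScalars ℚ ℝ 𝔸
    rw [← NormedSpace.exp_nsmul, ← Nat.cast_smul_eq_nsmul ℝ, smul_smul, mul_inv_cancel₀ hn'.ne', one_smul]
  set c := Real.exp ((n:ℝ)⁻¹ * (‖A‖ + ‖B‖)) with hc
  have ninv : ∀ x : 𝔸, ‖(n:ℝ)⁻¹ • x‖ = (n:ℝ)⁻¹ * ‖x‖ := fun x => by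
    rw [norm_smul, Real.norm_of_nonneg (by positivity)]
  have key := aux_pow_sub (NormedSpace.exp ((n:ℝ)⁻¹ • A) * NormedSpace.exp ((n:ℝ)⁻¹ • B))
    (NormedSpace.exp ((n:ℝ)⁻¹ • (A + B))) c (by
      refine (norm_mul_le _ _).trans ?_
      rw [hc, mul_add, Real.exp_add, ← ninv, ← ninv]
      gcongr <;> apply aux_norm_exp_le) (by
      refine (aux_norm_exp_le _).trans ?_
      rw [ninv, hc]
      gcongr
      exact norm_add_le _ _) n
  have hc1 : 1 ≤ c := Real.one_le_exp (by positivity)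
  have hcn : c ^ n = Real.exp (‖A‖ + ‖B‖) := by
    rw [hc, ← Real.exp_nat_mul, ← mul_assoc, mul_inv_cancel₀ hn'.ne', one_mul]
  rw [hY, Real.norm_of_nonneg hn'.le, mul_assoc, ← hcn]
  refine le_trans ?_ key
  exact le_mul_of_one_le_left (norm_nonneg _) hc1

section GT
variable {n : Type*} [Fintype n] [DecidableEq n]

lemma aux_cs (X Y : Matrix n n ℂ) :
    ‖(X * Y).trace‖ ^ 2 ≤ ‖(Xᴴ * X).trace‖ * ‖(Yᴴ * Y).trace‖ := by
  have hh : ∀ Z : Matrix n n ℂ, ‖(Zᴴ * Z).trace‖ = ∑ p : n × n, ‖Z p.1 p.2‖ ^ 2 := by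
    intro Z
    have : (Zᴴ * Z).trace = ((∑ p : n × n, ‖Z p.1 p.2‖ ^ 2 : ℝ) : ℂ) := by
      simp only [Matrix.trace, Matrix.diag, Matrix.mul_apply, Matrix.conjTranspose_apply]
      rw [Finset.sum_comm, Fintype.sum_prod_type]
      push_cast
      refine Finset.sum_congr rfl fun i _ => Finset.sum_congr rfl fun j _ => ?_
      exact Complex.conj_mul' _
    rw [this, Complex.norm_real, Real.norm_of_nonneg (by positivity)]
  have h1 : ‖(X * Y).trace‖ ≤ ∑ p : n × n, ‖X p.1 p.2‖ * ‖Y p.2 p.1‖ := by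
    simp only [Matrix.trace, Matrix.diag, Matrix.mul_apply]
    rw [Fintype.sum_prod_type]
    refine (norm_sum_le _ _).trans (Finset.sum_le_sum fun i _ => ?_)
    refine (norm_sum_le _ _).trans (Finset.sum_le_sum fun j _ => ?_)
    rw [norm_mul]
  have h2 : ∑ p : n × n, ‖Y p.1 p.2‖ ^ 2 = ∑ p : n × n, ‖Y p.2 p.1‖ ^ 2 :=
    (Equiv.sum_comp (Equiv.prodComm n n) (fun p => ‖Y p.1 p.2‖ ^ 2)).symm
  rw [hh, hh, h2]
  refine le_trans ?_ (Finset.sum_mul_sq_le_sq_mul_sq _ _ _)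
  gcongr

lemma aux_trace_pow_comm (X Y : Matrix n n ℂ) (m : ℕ) :
    ((X * Y) ^ m).trace = ((Y * X) ^ m).trace := by
  cases m with
  | zero => simp
  | succ m =>
    have : (X * Y) ^ (m+1) = X * ((Y * X) ^ m * Y) := by
      rw [← mul_assoc]
      induction m with
      | zero => simp
      | succ m ih => rw [pow_succ, ih, pow_succ]; noncomm_ring
    rw [this, Matrix.trace_mul_comm, mul_assoc, ← pow_succ]

lemma aux_TG (j : ℕ) :
    (∀ X : Matrix n n ℂ, ‖(X ^ (2 * 2 ^ j)).trace‖ ≤ ‖((Xᴴ * X) ^ (2 ^ j)).trace‖) ∧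
    (∀ P Q : Matrix n n ℂ, P.IsHermitian → Q.IsHermitian →
      ‖((P * Q) ^ (2 ^ j)).trace‖ ^ 2 ≤ ‖(P ^ (2 * 2 ^ j)).trace‖ * ‖(Q ^ (2 * 2 ^ j)).trace‖) := by
  induction j with
  | zero =>
    constructor
    · intro X
      have h := aux_cs X X
      simp only [pow_zero, mul_one, pow_one, sq X]
      rw [← sq ‖(Xᴴ * X).trace‖] at h
      exact le_of_sq_le_sq h (norm_nonneg _)
    · intro P Q hP hQ
      have h := aux_cs P Q
      simpa [pow_zero, mul_one, pow_one, sq, hP.eq, hQ.eq] using h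
  | succ j ih =>
    obtain ⟨T, G⟩ := ih
    constructor
    · intro X
      have h1 := T (X ^ 2)
      rw [← pow_mul] at h1
      have h2 : (((X ^ 2)ᴴ * X ^ 2) ^ 2 ^ j).trace = (((Xᴴ * X) * (X * Xᴴ)) ^ 2 ^ j).trace := by
        rw [sq, conjTranspose_mul, show Xᴴ * Xᴴ * (X * X) = Xᴴ * (Xᴴ * X * X) by noncomm_ring,
          aux_trace_pow_comm]
        congr 2; noncomm_ring
      have h3 := G _ _ (isHermitian_conjTranspose_mul_self X) (isHermitian_mul_conjTranspose_self X)
      rw [aux_trace_pow_comm X Xᴴ, ← sq] at h3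
      rw [h2] at h1
      rw [pow_succ' 2 j]
      exact h1.trans (le_of_sq_le_sq h3 (norm_nonneg _))
    · intro P Q hP hQ
      have h1 := T (P * Q)
      have h2 : (((P * Q)ᴴ * (P * Q)) ^ 2 ^ j).trace = ((P ^ 2 * Q ^ 2) ^ 2 ^ j).trace := by
        rw [conjTranspose_mul, hP.eq, hQ.eq, show Q * P * (P * Q) = Q * (P * P * Q) by noncomm_ring,
          aux_trace_pow_comm]
        congr 2; noncomm_ring
      have h3 := G _ _ (hP.pow 2) (hQ.pow 2)
      rw [← pow_mul, ← pow_mul] at h3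
      rw [h2] at h1
      rw [pow_succ' 2 j]
      refine le_trans ?_ h3
      gcongr

lemma aux_iter (k : ℕ) : ∀ (P Q : Matrix n n ℂ), P.IsHermitian → Q.IsHermitian →
    ‖((P * Q) ^ (2 ^ k)).trace‖ ≤ ‖(P ^ (2 ^ k) * Q ^ (2 ^ k)).trace‖ := by
  induction k with
  | zero => intro P Q _ _; simp
  | succ k ih =>
    intro P Q hP hQ
    have h1 := (aux_TG k).1 (P * Q)
    have h2 : (((P * Q)ᴴ * (P * Q)) ^ 2 ^ k).trace = ((P ^ 2 * Q ^ 2) ^ 2 ^ k).trace := by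
        rw [conjTranspose_mul, hP.eq, hQ.eq, show Q * P * (P * Q) = Q * (P * P * Q) by noncomm_ring,
          aux_trace_pow_comm]
        congr 2; noncomm_ring
    have h3 := ih _ _ (hP.pow 2) (hQ.pow 2)
    rw [← pow_mul, ← pow_mul] at h3
    rw [h2] at h1
    rw [pow_succ' 2 k]
    exact h1.trans h3

open Filter Topology in
lemma aux_golden_thompson (A B : Matrix n n ℂ) (hA : A.IsHermitian) (hB : B.IsHermitian) :
    ‖(NormedSpace.exp (A + B)).trace‖ ≤ ‖(NormedSpace.exp A * NormedSpace.exp B).trace‖ := by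
  cases isEmpty_or_nonempty n
  · simp [Matrix.trace]
  let _ : NormedRing (Matrix n n ℂ) := Matrix.linftyOpNormedRing
  let _ : NormedAlgebra ℝ (Matrix n n ℂ) := Matrix.linftyOpNormedAlgebra
  have : NormOneClass (Matrix n n ℂ) := Matrix.linfty_opNormOneClass
  have h := aux_lie_trotter A B
  have hp : Tendsto (fun k : ℕ => 2 ^ k) atTop atTop := tendsto_pow_atTop_atTop_of_one_lt (by norm_num)
  have hct : Continuous (fun X : Matrix n n ℂ => ‖X.trace‖) := (continuous_id.matrix_trace).norm
  have h2 := (hct.tendsto _).comp (h.comp hp)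
  refine le_of_tendsto h2 (Eventually.of_forall fun k => ?_)
  simp only [Function.comp_def]
  have hher : ∀ (C : Matrix n n ℂ), C.IsHermitian → ∀ t : ℝ, (NormedSpace.exp (t • C)).IsHermitian := by
    intro C hC t
    apply Matrix.IsHermitian.exp
    rw [Matrix.IsHermitian, conjTranspose_smul, hC.eq]; simp
  have hpw : ∀ (C : Matrix n n ℂ), NormedSpace.exp ((((2 ^ k : ℕ) : ℝ))⁻¹ • C) ^ (2 ^ k) = NormedSpace.exp C := by
    intro C
    rw [← Matrix.exp_nsmul, ← Nat.cast_smul_eq_nsmul ℝ, smul_smul, mul_inv_cancel₀ (by positivity), one_smul]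
  have h3 := aux_iter k _ _ (hher A hA (((2 ^ k : ℕ) : ℝ))⁻¹) (hher B hB (((2 ^ k : ℕ) : ℝ))⁻¹)
  rwa [hpw, hpw] at h3
end GT

section Ent
variable {n : Type*} [Fintype n] [DecidableEq n]

lemma aux_spec (A : Matrix n n ℂ) (hA : A.IsHermitian) :
    ∃ U : Matrix n n ℂ, U * Uᴴ = 1 ∧ Uᴴ * U = 1 ∧
      A = U * diagonal (fun i => (hA.eigenvalues i : ℂ)) * Uᴴ := by
  refine ⟨hA.eigenvectorUnitary, ?_, ?_, ?_⟩
  · exact Unitary.mul_star_self_of_mem hA.eigenvectorUnitary.2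
  · exact Unitary.star_mul_self_of_mem hA.eigenvectorUnitary.2
  · exact hA.spectral_theorem

lemma aux_exp_conj (U : Matrix n n ℂ) (h1 : U * Uᴴ = 1) (d : n → ℝ) :
    NormedSpace.exp (U * diagonal (fun i => (d i : ℂ)) * Uᴴ)
      = U * diagonal (fun i => ((Real.exp (d i) : ℝ) : ℂ)) * Uᴴ := by
  have hU : IsUnit U := IsUnit.of_mul_eq_one _ h1
  have hinv : Uᴴ = U⁻¹ := (Matrix.inv_eq_right_inv h1).symm
  rw [hinv, Matrix.exp_conj _ _ hU, Matrix.exp_diagonal]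
  congr 3
  ext i
  rw [Pi.coe_exp]
  simp [Complex.exp_eq_exp_ℂ]

lemma aux_tr_ww (W : Matrix n n ℂ) (d e : n → ℝ) :
    (diagonal (fun i => (d i : ℂ)) * (W * diagonal (fun i => (e i : ℂ)) * Wᴴ)).trace.re
      = ∑ i, ∑ j, d i * e j * ‖W i j‖ ^ 2 := by
  have : (diagonal (fun i => (d i : ℂ)) * (W * diagonal (fun i => (e i : ℂ)) * Wᴴ)).trace
      = ((∑ i, ∑ j, d i * e j * ‖W i j‖ ^ 2 : ℝ) : ℂ) := by
    simp only [Matrix.trace, Matrix.diag, Matrix.diagonal_mul]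
    push_cast
    refine Finset.sum_congr rfl fun i _ => ?_
    rw [Matrix.mul_apply, Finset.mul_sum]
    refine Finset.sum_congr rfl fun j _ => ?_
    rw [Matrix.mul_diagonal, conjTranspose_apply, ← Complex.mul_conj']
    simp only [RCLike.star_def]
    ring
  rw [this, Complex.ofReal_re]

lemma aux_scalar (x h : ℝ) (hx : 0 ≤ x) : Real.negMulLog x + x * h ≤ Real.exp h - x := by
  rcases hx.eq_or_lt with rfl | hx
  · simp [Real.exp_nonneg]
  · have h1 := Real.add_one_le_exp (h - Real.log x)
    rw [Real.exp_sub, Real.exp_log hx, le_div_iff₀ hx] at h1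
    unfold Real.negMulLog
    nlinarith

lemma aux_klein (A H : Matrix n n ℂ) (hA : A.PosSemidef) (hH : H.IsHermitian) :
    entropy A + (A * H).trace.re ≤ (NormedSpace.exp H).trace.re - A.trace.re := by
  obtain ⟨U, hU1, hU2, hUA⟩ := aux_spec A hA.1
  obtain ⟨V, hV1, hV2, hVH⟩ := aux_spec H hH
  set lam := hA.1.eigenvalues with hlam
  set h := hH.eigenvalues with hh
  have hl0 : ∀ i, 0 ≤ lam i := hA.eigenvalues_nonneg
  set W := Uᴴ * V with hW
  have hW1 : W * Wᴴ = 1 := by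
    rw [hW, conjTranspose_mul, conjTranspose_conjTranspose,
      show Uᴴ * V * (Vᴴ * U) = Uᴴ * (V * Vᴴ) * U by noncomm_ring, hV1, mul_one, hU2]
  have hW2 : Wᴴ * W = 1 := by
    rw [hW, conjTranspose_mul, conjTranspose_conjTranspose,
      show Vᴴ * U * (Uᴴ * V) = Vᴴ * (U * Uᴴ) * V by noncomm_ring, hU1, mul_one, hV2]
  have e1 : ∀ d : n → ℝ, ∑ i, d i = ∑ i, ∑ j, d i * ‖W i j‖ ^ 2 := by
    intro d
    have := aux_tr_ww W d (fun _ => 1)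
    simp only [Complex.ofReal_one, mul_one] at this
    rw [← this, diagonal_one, mul_one, hW1, mul_one]
    simp
  have e2 : ∀ d : n → ℝ, ∑ i, d i = ∑ i, ∑ j, d j * ‖W i j‖ ^ 2 := by
    intro d
    have := aux_tr_ww W (fun _ => 1) d
    simp only [Complex.ofReal_one, one_mul] at this
    rw [← this, diagonal_one, one_mul, mul_assoc, Matrix.trace_mul_comm, mul_assoc, hW2, mul_one]
    simp
  have t1 : entropy A = ∑ i, ∑ j, Real.negMulLog (lam i) * ‖W i j‖ ^ 2 := by
    rw [entropy, dif_pos hA.1, ← hlam, e1]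
  have t2 : (A * H).trace.re = ∑ i, ∑ j, lam i * h j * ‖W i j‖ ^ 2 := by
    rw [← aux_tr_ww, hUA, hVH, show U * diagonal (fun i => (lam i : ℂ)) * Uᴴ *
      (V * diagonal (fun i => (h i : ℂ)) * Vᴴ) = U * (diagonal (fun i => (lam i : ℂ)) * Uᴴ *
      (V * diagonal (fun i => (h i : ℂ)) * Vᴴ)) by noncomm_ring, Matrix.trace_mul_comm, hW,
      conjTranspose_mul, conjTranspose_conjTranspose]
    congr 2; noncomm_ring
  have trc : ∀ (U : Matrix n n ℂ) (d : n → ℝ), Uᴴ * U = 1 →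
      (U * diagonal (fun i => (d i : ℂ)) * Uᴴ).trace.re = ∑ i, d i := by
    intro U d h
    rw [mul_assoc, Matrix.trace_mul_comm, mul_assoc, h, mul_one]; simp
  have t3 : (NormedSpace.exp H).trace.re = ∑ i, ∑ j, Real.exp (h j) * ‖W i j‖ ^ 2 := by
    rw [hVH, aux_exp_conj V hV1, trc _ _ hV2, e2]
  have t4 : A.trace.re = ∑ i, ∑ j, lam i * ‖W i j‖ ^ 2 := by
    rw [hUA, trc _ _ hU2, e1]
  rw [t1, t2, t3, t4]
  simp only [← Finset.sum_add_distrib, ← Finset.sum_sub_distrib]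
  refine Finset.sum_le_sum fun i _ => Finset.sum_le_sum fun j _ => ?_
  rw [← add_mul, ← sub_mul]
  exact mul_le_mul_of_nonneg_right (aux_scalar _ _ (hl0 i)) (by positivity)

lemma aux_log (A : Matrix n n ℂ) (hA : A.PosSemidef) (ε : ℝ) (hε : 0 < ε) :
    ∃ L : Matrix n n ℂ, L.IsHermitian ∧ NormedSpace.exp L = A + (ε : ℂ) • 1 ∧
      - entropy A ≤ (A * L).trace.re := by
  obtain ⟨U, hU1, hU2, hUA⟩ := aux_spec A hA.1
  set lam := hA.1.eigenvalues with hlam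
  have hl0 : ∀ i, 0 ≤ lam i := hA.eigenvalues_nonneg
  refine ⟨U * diagonal (fun i => ((Real.log (lam i + ε) : ℝ) : ℂ)) * Uᴴ, ?_, ?_, ?_⟩
  · apply Matrix.isHermitian_mul_mul_conjTranspose
    rw [Matrix.IsHermitian, diagonal_conjTranspose]
    congr 1; ext i
    simp only [Pi.star_apply, RCLike.star_def, Complex.conj_ofReal]
  · rw [aux_exp_conj U hU1]
    conv_rhs => rw [hUA, ← hU1]
    have : diagonal (fun i => ((Real.exp (Real.log (lam i + ε)) : ℝ) : ℂ))
        = diagonal (fun i => (lam i : ℂ)) + (ε : ℂ) • (1 : Matrix n n ℂ) := by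
      ext i j
      by_cases hij : i = j
      · subst hij
        rw [Matrix.diagonal_apply_eq, Real.exp_log (by linarith [hl0 i])]
        simp
      · simp [hij]
    rw [this, mul_add, add_mul]
    simp
  · have : (A * (U * diagonal (fun i => ((Real.log (lam i + ε) : ℝ) : ℂ)) * Uᴴ)).trace.re
        = ∑ i, lam i * Real.log (lam i + ε) := by
      have : A * (U * diagonal (fun i => ((Real.log (lam i + ε) : ℝ) : ℂ)) * Uᴴ)
        = U * (diagonal (fun i => (lam i : ℂ)) * diagonal (fun i => ((Real.log (lam i + ε) : ℝ) : ℂ)) * Uᴴ) := by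
        conv_lhs => rw [hUA]
        rw [show U * diagonal (fun i => (lam i : ℂ)) * Uᴴ *
          (U * diagonal (fun i => ((Real.log (lam i + ε) : ℝ) : ℂ)) * Uᴴ) = U * (diagonal (fun i => (lam i : ℂ)) * (Uᴴ *
          U) * diagonal (fun i => ((Real.log (lam i + ε) : ℝ) : ℂ)) * Uᴴ) by noncomm_ring, hU2, mul_one]
      rw [this, Matrix.trace_mul_comm, mul_assoc, hU2, mul_one, diagonal_mul_diagonal, trace_diagonal, Complex.re_sum]
      refine Finset.sum_congr rfl fun i _ => ?_
      rw [← Complex.ofReal_mul, Complex.ofReal_re]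
    rw [this, entropy, dif_pos hA.1, ← Finset.sum_neg_distrib]
    refine Finset.sum_le_sum fun i _ => ?_
    rw [← hlam, Real.negMulLog]
    rcases (hl0 i).eq_or_lt with h | h
    · rw [← h]; simp
    · rw [neg_mul, neg_neg]
      have := Real.log_le_log h (by linarith : lam i ≤ lam i + ε)
      gcongr

lemma aux_entropy_roots (A : Matrix n n ℂ) (hA : A.IsHermitian) :
    entropy A = (A.charpoly.roots.map (fun z : ℂ => Real.negMulLog z.re)).sum := by
  rw [entropy, dif_pos hA, hA.roots_charpoly_eq_eigenvalues, Multiset.map_map]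
  simp [Function.comp_def]

lemma aux_entropy_iso {m : Type*} [Fintype m] [DecidableEq m] (A : Matrix n n ℂ) (hA : A.IsHermitian)
    (V : Matrix m n ℂ) (hV : Vᴴ * V = 1) : entropy (V * A * Vᴴ) = entropy A := by
  have h := Matrix.charpoly_mul_comm' V (A * Vᴴ)
  rw [Matrix.mul_assoc A, hV, Matrix.mul_one, ← Matrix.mul_assoc] at h
  have h2 := congrArg (fun p => (p.roots.map (fun z : ℂ => Real.negMulLog z.re)).sum) h
  rw [Polynomial.roots_mul (mul_ne_zero (by simp) (Matrix.charpoly_monic _).ne_zero),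
    Polynomial.roots_mul (mul_ne_zero (by simp) (Matrix.charpoly_monic _).ne_zero)] at h2
  simp only [Polynomial.roots_pow, Polynomial.roots_X, Multiset.map_add, Multiset.sum_add, Multiset.map_nsmul,
    Multiset.sum_nsmul, Multiset.map_singleton, Multiset.sum_singleton, Complex.zero_re, Real.negMulLog_zero,
    smul_zero, zero_add] at h2
  rw [aux_entropy_roots _ (isHermitian_mul_mul_conjTranspose _ hA), aux_entropy_roots _ hA, h2]
end Ent

section Core
variable {k K : Type*} [Fintype k] [DecidableEq k] [Fintype K] [DecidableEq K]

lemma aux_exp_kron (A : Matrix K K ℂ) :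
    NormedSpace.exp ((1 : Matrix k k ℂ) ⊗ₖ A) = (1 : Matrix k k ℂ) ⊗ₖ NormedSpace.exp A := by
  let _ : NormedRing (Matrix K K ℂ) := Matrix.linftyOpNormedRing
  let _ : NormedAlgebra ℚ (Matrix K K ℂ) := Matrix.linftyOpNormedAlgebra
  let _ : NormedAlgebra ℂ (Matrix K K ℂ) := Matrix.linftyOpNormedAlgebra
  have : CompleteSpace (Matrix K K ℂ) := FiniteDimensional.complete ℂ _
  let _ : NormedRing (Matrix (k × K) (k × K) ℂ) := Matrix.linftyOpNormedRing
  let f : Matrix K K ℂ →+* Matrix (k × K) (k × K) ℂ :=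
    { toFun := fun A => (1 : Matrix k k ℂ) ⊗ₖ A
      map_one' := one_kronecker_one
      map_mul' := fun A B => by rw [← mul_kronecker_mul, one_mul]
      map_zero' := kronecker_zero _
      map_add' := fun A B => kronecker_add _ _ _ }
  have hf : Continuous f := by
    refine continuous_matrix fun p q => ?_
    change Continuous fun A : Matrix K K ℂ => (1 : Matrix k k ℂ) p.1 q.1 * A p.2 q.2
    exact continuous_const.mul (continuous_id.matrix_elem _ _)
  exact (NormedSpace.map_exp f hf A).symm

lemma aux_core (σ : Matrix (k × K) (k × K) ℂ) (hσ : σ.PosSemidef) (A : Matrix K K ℂ)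
    (hA : A.IsHermitian) (L : K → Matrix k k ℂ) (hL : ∀ x, (L x).IsHermitian) :
    entropy σ + (σ * ((1 : Matrix k k ℂ) ⊗ₖ A)).trace.re + (σ * blockDiagonal L).trace.re
      ≤ ∑ x, ‖NormedSpace.exp A x x‖ * ‖(NormedSpace.exp (L x)).trace‖ - σ.trace.re := by
  have h1 : ((1 : Matrix k k ℂ) ⊗ₖ A).IsHermitian := by
    rw [Matrix.IsHermitian, conjTranspose_kronecker, hA.eq, conjTranspose_one]
  have h2 : (blockDiagonal L).IsHermitian := by
    rw [Matrix.IsHermitian, blockDiagonal_conjTranspose]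
    congr 1; ext1 x; exact hL x
  have hk := aux_klein σ _ hσ (h1.add h2)
  have hgt := aux_golden_thompson _ _ h1 h2
  rw [mul_add, trace_add, Complex.add_re, ← add_assoc] at hk
  refine hk.trans (sub_le_sub_right ?_ _)
  refine (Complex.re_le_norm _).trans (hgt.trans ?_)
  rw [aux_exp_kron, Matrix.exp_blockDiagonal]
  have : ((1 : Matrix k k ℂ) ⊗ₖ NormedSpace.exp A * blockDiagonal (NormedSpace.exp L)).trace
      = ∑ x, NormedSpace.exp A x x * (NormedSpace.exp (L x)).trace := by
    have hc : ∀ x, NormedSpace.exp L x = NormedSpace.exp (L x) := by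
      intro x
      let _ : NormedRing (Matrix k k ℂ) := Matrix.linftyOpNormedRing
      let _ : NormedAlgebra ℚ (Matrix k k ℂ) := Matrix.linftyOpNormedAlgebra
      let _ : NormedAlgebra ℂ (Matrix k k ℂ) := Matrix.linftyOpNormedAlgebra
      have : CompleteSpace (Matrix k k ℂ) := FiniteDimensional.complete ℂ _
      exact Pi.coe_exp L x
    simp only [Matrix.trace, Matrix.diag, Matrix.mul_apply, Fintype.sum_prod_type, kroneckerMap_apply,
      blockDiagonal_apply, Matrix.one_apply, hc]
    simp [Finset.mul_sum]
    rw [Finset.sum_comm]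
  rw [this]
  refine (norm_sum_le _ _).trans (Finset.sum_le_sum fun x _ => ?_)
  rw [norm_mul]
end Core

open scoped MatrixOrder in
lemma aux_sqrt {m : Type*} [Fintype m] [DecidableEq m] (P : Matrix m m ℂ) (hP : P.PosSemidef) :
    ∃ Q : Matrix m m ℂ, P = Qᴴ * Q :=
  CStarAlgebra.nonneg_iff_eq_star_mul_self.mp hP.nonneg

section PT
variable {m k : Type*} [Fintype m] [DecidableEq m] [Fintype k] [DecidableEq k]

lemma aux_ptF_psd (X : Matrix (m × k) (m × k) ℂ) (hX : X.PosSemidef) : (ptraceFst X).PosSemidef := by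
  have : ptraceFst X = ∑ a : m, X.submatrix (fun i => (a, i)) (fun i => (a, i)) := by
    ext i j; simp [ptraceFst, Matrix.sum_apply]
  rw [this]
  exact posSemidef_sum _ fun a _ => hX.submatrix _

lemma aux_ptS_psd (X : Matrix (m × k) (m × k) ℂ) (hX : X.PosSemidef) : (ptraceSnd X).PosSemidef := by
  have : ptraceSnd X = ∑ a : k, X.submatrix (fun i => (i, a)) (fun i => (i, a)) := by
    ext i j; simp [ptraceSnd, Matrix.sum_apply]
  rw [this]
  exact posSemidef_sum _ fun a _ => hX.submatrix _

lemma aux_ptF_tr (X : Matrix (m × k) (m × k) ℂ) : (ptraceFst X).trace = X.trace := by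
  simp only [Matrix.trace, Matrix.diag, ptraceFst, of_apply, Fintype.sum_prod_type]
  rw [Finset.sum_comm]

lemma aux_ptS_tr (X : Matrix (m × k) (m × k) ℂ) : (ptraceSnd X).trace = X.trace := by
  simp only [Matrix.trace, Matrix.diag, ptraceSnd, of_apply, Fintype.sum_prod_type]

lemma aux_ptF_cyc (X : Matrix (m × k) (m × k) ℂ) (B : Matrix m m ℂ) :
    ptraceFst ((B ⊗ₖ (1 : Matrix k k ℂ)) * X) = ptraceFst (X * (B ⊗ₖ (1 : Matrix k k ℂ))) := by
  ext i j
  simp only [ptraceFst, of_apply, Matrix.mul_apply, Fintype.sum_prod_type, kroneckerMap_apply, Matrix.one_apply]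
  simp
  rw [Finset.sum_comm]
  simp only [mul_comm]

lemma aux_ptF_mul (X : Matrix (m × k) (m × k) ℂ) (L : Matrix k k ℂ) :
    (X * ((1 : Matrix m m ℂ) ⊗ₖ L)).trace = (ptraceFst X * L).trace := by
  simp only [Matrix.trace, Matrix.diag, ptraceFst, of_apply, Matrix.mul_apply, Fintype.sum_prod_type,
    kroneckerMap_apply, Matrix.one_apply]
  simp [Finset.sum_mul]
  rw [Finset.sum_comm]
  refine Finset.sum_congr rfl fun i _ => ?_
  rw [Finset.sum_comm]

lemma aux_ptS_mul (X : Matrix (m × k) (m × k) ℂ) (B : Matrix m m ℂ) :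
    (X * (B ⊗ₖ (1 : Matrix k k ℂ))).trace = (ptraceSnd X * B).trace := by
  simp only [Matrix.trace, Matrix.diag, ptraceSnd, of_apply, Matrix.mul_apply, Fintype.sum_prod_type,
    kroneckerMap_apply, Matrix.one_apply]
  simp [Finset.sum_mul]
  refine Finset.sum_congr rfl fun i _ => ?_
  rw [Finset.sum_comm]

lemma aux_R_psd (ρ : Matrix (m × k) (m × k) ℂ) (hρ : ρ.PosSemidef) (P : Matrix m m ℂ)
    (hP : P.PosSemidef) : (ptraceFst ((P ⊗ₖ (1 : Matrix k k ℂ)) * ρ)).PosSemidef := by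
  obtain ⟨Q, rfl⟩ := aux_sqrt P hP
  have : (Qᴴ * Q) ⊗ₖ (1 : Matrix k k ℂ) = (Qᴴ ⊗ₖ (1 : Matrix k k ℂ)) * (Q ⊗ₖ (1 : Matrix k k ℂ)) := by
    rw [← mul_kronecker_mul, one_mul]
  rw [this, mul_assoc, aux_ptF_cyc]
  apply aux_ptF_psd
  have h := hρ.mul_mul_conjTranspose_same (Q ⊗ₖ (1 : Matrix k k ℂ))
  rwa [conjTranspose_kronecker, conjTranspose_one] at h

/-- The first inequality, with an error term. -/
lemma aux_first {M : ℕ} (ρ : Matrix (m × k) (m × k) ℂ) (hρ : ρ.PosSemidef) (hρtr : ρ.trace = 1)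
    (P : Fin M → Matrix m m ℂ) (hP : ∀ α, (P α).PosSemidef) (hPsum : ∑ α, P α = 1)
    (τ : Fin M → Matrix k k ℂ) (hτ : ∀ α, (τ α).PosSemidef) (hτ1 : ∀ α, ‖(τ α).trace‖ ≤ 1)
    (n : Fin M → ℝ) (hn : ∀ α, 0 ≤ n α)
    (hR : ∀ α, ptraceFst ((P α ⊗ₖ (1 : Matrix k k ℂ)) * ρ) = (n α : ℂ) • τ α) (ε : ℝ) (hε : 0 < ε) :
    entropy ρ ≤ entropy (ptraceSnd ρ) + ∑ α, n α * entropy (τ α) +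
      ((1 + ε * Fintype.card (m × Fin M)) * (1 + ε * Fintype.card k) - 1) := by
  choose Q hQ using fun α => aux_sqrt _ (hP α)
  let V : Matrix (m × Fin M) m ℂ := of fun x j => Q x.2 x.1 j
  let D : Fin M → Matrix (m × Fin M) (m × Fin M) ℂ := fun α => diagonal fun x => if x.2 = α then 1 else 0
  have hVD : ∀ α, Vᴴ * D α * V = P α := by
    intro α
    rw [hQ α]
    ext i j
    rw [Matrix.mul_apply, Matrix.mul_apply]
    simp only [D, Matrix.mul_diagonal]
    simp only [V, conjTranspose_apply, of_apply, Fintype.sum_prod_type]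
    simp
  have hDs : ∑ α, D α = 1 := by
    ext x y
    rw [Matrix.sum_apply]
    by_cases h : x = y
    · subst h; simp [D]
    · simp [D, h]
  have hVV : Vᴴ * V = 1 := by
    rw [← hPsum, ← Finset.sum_congr rfl fun α _ => hVD α, ← Matrix.sum_mul, ← Matrix.mul_sum, hDs,
      Matrix.mul_one]
  let W : Matrix (k × (m × Fin M)) (m × k) ℂ := ((1 : Matrix k k ℂ) ⊗ₖ V).submatrix id Prod.swap
  have hWX : ∀ (B : Matrix k k ℂ) (C : Matrix (m × Fin M) (m × Fin M) ℂ),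
      Wᴴ * (B ⊗ₖ C) * W = (Vᴴ * C * V) ⊗ₖ B := by
    intro B C
    have : Wᴴ * (B ⊗ₖ C) * W
      = ((((1 : Matrix k k ℂ) ⊗ₖ V)ᴴ * (B ⊗ₖ C)) * ((1 : Matrix k k ℂ) ⊗ₖ V)).submatrix Prod.swap Prod.swap := rfl
    rw [this, conjTranspose_kronecker, ← mul_kronecker_mul, ← mul_kronecker_mul, conjTranspose_one,
      one_mul, mul_one]
    ext p q
    simp [kroneckerMap_apply, mul_comm]
  have hWW : Wᴴ * W = 1 := by
    have := hWX 1 1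
    rwa [one_kronecker_one, Matrix.mul_one, Matrix.mul_one, hVV, one_kronecker_one] at this
  have hρ1 := aux_ptS_psd ρ hρ
  have hρ1V := hρ1.mul_mul_conjTranspose_same V
  obtain ⟨A, hA, hAe, hAS⟩ := aux_log (V * ptraceSnd ρ * Vᴴ) hρ1V ε hε
  choose L hL hLe hLS using fun α => aux_log (τ α) (hτ α) ε hε
  have hcore := aux_core (W * ρ * Wᴴ) (hρ.mul_mul_conjTranspose_same W) A hA (fun x => L x.2) (fun x => hL x.2)
  rw [aux_entropy_iso ρ hρ.1 W hWW] at hcore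
  rw [aux_entropy_iso _ hρ1.1 V hVV] at hAS
  have cyc : ∀ Y, (W * ρ * Wᴴ * Y).trace = (ρ * (Wᴴ * Y * W)).trace := by
    intro Y
    rw [Matrix.mul_assoc, Matrix.mul_assoc, Matrix.trace_mul_comm, Matrix.mul_assoc]
  have t1 : (W * ρ * Wᴴ * ((1 : Matrix k k ℂ) ⊗ₖ A)).trace = (V * ptraceSnd ρ * Vᴴ * A).trace := by
    rw [cyc, hWX, aux_ptS_mul, Matrix.mul_assoc V, Matrix.mul_assoc V, Matrix.trace_mul_comm V]
    simp only [Matrix.mul_assoc]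
  have hbd : blockDiagonal (fun x : m × Fin M => L x.2) = ∑ α, L α ⊗ₖ D α := by
    ext p q
    rw [Matrix.sum_apply]
    simp only [blockDiagonal_apply, kroneckerMap_apply, D, diagonal_apply]
    by_cases h : p.2 = q.2
    · simp [h]
    · simp [h]
  have t2 : (W * ρ * Wᴴ * blockDiagonal (fun x : m × Fin M => L x.2)).trace
      = ∑ α, (n α : ℂ) * (τ α * L α).trace := by
    rw [cyc, hbd, Matrix.mul_sum, Matrix.sum_mul, Matrix.mul_sum, Matrix.trace_sum]
    refine Finset.sum_congr rfl fun α _ => ?_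
    rw [hWX, hVD]
    have : P α ⊗ₖ L α = ((1 : Matrix m m ℂ) ⊗ₖ L α) * (P α ⊗ₖ (1 : Matrix k k ℂ)) := by
      rw [← mul_kronecker_mul, one_mul, mul_one]
    rw [this, ← mul_assoc, Matrix.trace_mul_comm, ← mul_assoc, aux_ptF_mul, hR, Matrix.smul_mul,
      Matrix.trace_smul, smul_eq_mul]
  have t3 : (W * ρ * Wᴴ).trace = 1 := by
    rw [Matrix.mul_assoc, Matrix.trace_mul_comm, Matrix.mul_assoc, hWW, Matrix.mul_one, hρtr]
  have t4 : (V * ptraceSnd ρ * Vᴴ).trace = 1 := by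
    rw [Matrix.mul_assoc, Matrix.trace_mul_comm, Matrix.mul_assoc, hVV, Matrix.mul_one, aux_ptS_tr, hρtr]
  have b2 : - ∑ α, n α * entropy (τ α) ≤ (∑ α, (n α : ℂ) * (τ α * L α).trace).re := by
    rw [Complex.re_sum, ← Finset.sum_neg_distrib]
    refine Finset.sum_le_sum fun α _ => ?_
    rw [Complex.re_ofReal_mul, ← mul_neg]
    exact mul_le_mul_of_nonneg_left (hLS α) (hn α)
  have b3 : ∑ x : m × Fin M, ‖NormedSpace.exp A x x‖ * ‖(NormedSpace.exp (L x.2)).trace‖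
      ≤ (1 + ε * Fintype.card (m × Fin M)) * (1 + ε * Fintype.card k) := by
    have c1 : ∀ α, ‖(NormedSpace.exp (L α)).trace‖ ≤ 1 + ε * Fintype.card k := by
      intro α
      rw [hLe, trace_add, trace_smul, trace_one]
      refine (norm_add_le _ _).trans (add_le_add (hτ1 α) ?_)
      rw [smul_eq_mul, norm_mul, Complex.norm_natCast, Complex.norm_real, Real.norm_of_nonneg hε.le]
    have c2 : ∑ x : m × Fin M, ‖NormedSpace.exp A x x‖ ≤ 1 + ε * Fintype.card (m × Fin M) := by
      have : ∀ x, ‖NormedSpace.exp A x x‖ ≤ ((V * ptraceSnd ρ * Vᴴ) x x).re + ε := by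
        intro x
        rw [hAe, Matrix.add_apply]
        refine (norm_add_le _ _).trans (add_le_add ?_ ?_)
        · have h0 := hρ1V.diag_nonneg (i := x)
          have h6 := congrArg Complex.re (Complex.norm_of_nonneg' h0)
          rw [Complex.ofReal_re] at h6
          exact h6.le
        · simp [abs_of_pos hε]
      refine (Finset.sum_le_sum fun x _ => this x).trans ?_
      rw [Finset.sum_add_distrib, ← Complex.re_sum]
      have h5 : ∑ x, (V * ptraceSnd ρ * Vᴴ) x x = 1 := t4
      rw [h5]
      simp [mul_comm]
    calc _ ≤ ∑ x : m × Fin M, ‖NormedSpace.exp A x x‖ * (1 + ε * Fintype.card k) :=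
          Finset.sum_le_sum fun x _ => mul_le_mul_of_nonneg_left (c1 _) (norm_nonneg _)
      _ = (∑ x : m × Fin M, ‖NormedSpace.exp A x x‖) * (1 + ε * Fintype.card k) := by rw [Finset.sum_mul]
      _ ≤ _ := mul_le_mul_of_nonneg_right c2 (by positivity)
  rw [t1, t2, t3, Complex.one_re] at hcore
  linarith

lemma aux_concave {M : ℕ} (τ : Fin M → Matrix k k ℂ) (hτ : ∀ α, (τ α).PosSemidef)
    (n : Fin M → ℝ) (hn : ∀ α, 0 ≤ n α) (hτ1 : ∀ α, 0 < n α → (τ α).trace = 1) (hn1 : ∑ α, n α = 1)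
    (S : Matrix k k ℂ) (hS : S.PosSemidef) (hStr : S.trace = 1)
    (hSs : S = ∑ α, (n α : ℂ) • τ α) (ε : ℝ) (hε : 0 < ε) :
    ∑ α, n α * entropy (τ α) ≤ entropy S + ε * Fintype.card k := by
  obtain ⟨L, hL, hLe, hLS⟩ := aux_log S hS ε hε
  have h1 : ∀ α, n α * entropy (τ α) + n α * (τ α * L).trace.re ≤ n α * (ε * Fintype.card k) := by
    intro α
    rcases (hn α).eq_or_lt with h | h
    · simp [← h]
    · rw [← mul_add]
      refine mul_le_mul_of_nonneg_left ?_ h.le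
      have := aux_klein (τ α) L (hτ α) hL
      rw [hτ1 α h, hLe, trace_add, hStr, trace_smul, trace_one] at this
      simpa using this
  have h2 := Finset.sum_le_sum fun α (_ : α ∈ Finset.univ) => h1 α
  rw [Finset.sum_add_distrib, ← Finset.sum_mul, hn1, one_mul] at h2
  have h3 : (S * L).trace.re = ∑ α, n α * (τ α * L).trace.re := by
    rw [hSs, Matrix.sum_mul, Matrix.trace_sum, Complex.re_sum]
    refine Finset.sum_congr rfl fun α _ => ?_
    rw [Matrix.smul_mul, trace_smul, smul_eq_mul, Complex.re_ofReal_mul]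
  linarith
end PT

/-- **Improved subadditivity** (Corollary 4, finite case):
`S[ρ₁₂] ≤ S[ρ₁] + ∑_{α : n^α>0} n^α S[ρ₂^α] ≤ S[ρ₁] + S[ρ₂]`. -/
theorem improved_subadditivity
    {n₁ n₂ : Type*} [Fintype n₁] [Fintype n₂]
    [DecidableEq n₁] [DecidableEq n₂] {M : ℕ}
    (ρ : Matrix (n₁ × n₂) (n₁ × n₂) ℂ)
    (hρ : ρ.PosSemidef) (hρtr : ρ.trace = 1)
    (P : Fin M → Matrix n₁ n₁ ℂ)
    (hP : ∀ α, (P α).PosSemidef)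
    (hPsum : ∑ α, P α = 1)
    (n : Fin M → ℝ)
    (hn : ∀ α, n α = (((P α ⊗ₖ (1 : Matrix n₂ n₂ ℂ)) * ρ).trace).re)
    (ρ2 : Fin M → Matrix n₂ n₂ ℂ)
    (hρ2 : ∀ α, 0 < n α → ρ2 α = ((n α : ℂ))⁻¹ •
      ptraceFst ((P α ⊗ₖ (1 : Matrix n₂ n₂ ℂ)) * ρ)) :
    entropy ρ ≤ entropy (ptraceSnd ρ) +
        ∑ α ∈ Finset.univ.filter (fun α => 0 < n α), n α * entropy (ρ2 α)
    ∧ entropy (ptraceSnd ρ) +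
        (∑ α ∈ Finset.univ.filter (fun α => 0 < n α), n α * entropy (ρ2 α)) ≤
      entropy (ptraceSnd ρ) + entropy (ptraceFst ρ) := by
  classical
  have hRpsd := fun α => aux_R_psd ρ hρ (P α) (hP α)
  have hRtr : ∀ α, (ptraceFst ((P α ⊗ₖ (1 : Matrix n₂ n₂ ℂ)) * ρ)).trace = (n α : ℂ) := by
    intro α
    have h0 := (hRpsd α).trace_nonneg
    rw [hn α, ← aux_ptF_tr]
    exact (Complex.eq_re_of_ofReal_le (r := 0) (by simpa using h0))
  have hn0 : ∀ α, 0 ≤ n α := by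
    intro α
    have h0 := (hRpsd α).trace_nonneg
    rw [hRtr] at h0
    exact_mod_cast h0
  let τ : Fin M → Matrix n₂ n₂ ℂ := fun α => if 0 < n α then ρ2 α else 0
  have hτpos : ∀ α, 0 < n α → τ α = ((n α : ℂ))⁻¹ • ptraceFst ((P α ⊗ₖ (1 : Matrix n₂ n₂ ℂ)) * ρ) := by
    intro α h
    rw [← hρ2 α h]; simp [τ, h]
  have hτ0 : ∀ α, ¬ 0 < n α → τ α = 0 := by
    intro α h
    simp [τ, h]
  have hR : ∀ α, ptraceFst ((P α ⊗ₖ (1 : Matrix n₂ n₂ ℂ)) * ρ) = (n α : ℂ) • τ α := by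
    intro α
    by_cases h : 0 < n α
    · rw [hτpos α h, smul_smul, mul_inv_cancel₀ (by exact_mod_cast h.ne'), one_smul]
    · have h1 : n α = 0 := le_antisymm (not_lt.1 h) (hn0 α)
      rw [hτ0 α h, smul_zero]
      rw [← (hRpsd α).trace_eq_zero_iff, hRtr, h1, Complex.ofReal_zero]
  have hτpsd : ∀ α, (τ α).PosSemidef := by
    intro α
    by_cases h : 0 < n α
    · rw [hτpos α h]
      refine (hRpsd α).smul ?_
      rw [← Complex.ofReal_inv]
      exact_mod_cast (inv_pos.2 h).le
    · rw [hτ0 α h]; exact PosSemidef.zero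
  have hτ1 : ∀ α, 0 < n α → (τ α).trace = 1 := by
    intro α h
    rw [hτpos α h, trace_smul, hRtr, smul_eq_mul, inv_mul_cancel₀ (by exact_mod_cast h.ne')]
  have hτle : ∀ α, ‖(τ α).trace‖ ≤ 1 := by
    intro α
    by_cases h : 0 < n α
    · rw [hτ1 α h]; simp
    · rw [hτ0 α h]; simp
  have hsum : ptraceFst ρ = ∑ α, (n α : ℂ) • τ α := by
    rw [← Finset.sum_congr rfl fun α _ => hR α]
    have h1 : ρ = ∑ α, (P α ⊗ₖ (1 : Matrix n₂ n₂ ℂ)) * ρ := by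
      rw [← Matrix.sum_mul]
      have : ∑ α, P α ⊗ₖ (1 : Matrix n₂ n₂ ℂ) = 1 := by
        rw [← one_kronecker_one, ← hPsum]
        ext p q
        simp [Matrix.sum_apply, kroneckerMap_apply, Finset.sum_mul]
      rw [this, one_mul]
    conv_lhs => rw [h1]
    ext i j
    simp only [ptraceFst, of_apply, Matrix.sum_apply]
    rw [Finset.sum_comm]
  have hn1 : ∑ α, n α = 1 := by
    have h1 := congrArg Matrix.trace hsum
    rw [← Finset.sum_congr rfl fun α _ => hR α, Matrix.trace_sum, aux_ptF_tr, hρtr,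
      Finset.sum_congr rfl fun α _ => hRtr α] at h1
    exact_mod_cast h1.symm
  have hfil : ∑ α ∈ Finset.univ.filter (fun α => 0 < n α), n α * entropy (ρ2 α)
      = ∑ α, n α * entropy (τ α) := by
    rw [Finset.sum_filter]
    refine Finset.sum_congr rfl fun α _ => ?_
    by_cases h : 0 < n α
    · simp [τ, h]
    · have h1 : n α = 0 := le_antisymm (not_lt.1 h) (hn0 α)
      simp [h1]
  rw [hfil]
  have hev : ∀ᶠ ε : ℝ in nhdsWithin 0 (Set.Ioi 0), 0 < ε := eventually_mem_nhdsWithin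
  constructor
  · have hc : Continuous fun ε : ℝ => entropy (ptraceSnd ρ) + ∑ α, n α * entropy (τ α) +
      ((1 + ε * Fintype.card (n₁ × Fin M)) * (1 + ε * Fintype.card n₂) - 1) := by fun_prop
    have ht := (hc.tendsto 0).mono_left (nhdsWithin_le_nhds (s := Set.Ioi (0:ℝ)))
    simp only [zero_mul, add_zero, mul_one, sub_self] at ht
    refine ge_of_tendsto ht (hev.mono fun ε hε => ?_)
    exact aux_first ρ hρ hρtr P hP hPsum τ hτpsd hτle n hn0 hR ε hε
  · gcongr
    have hc : Continuous fun ε : ℝ => entropy (ptraceFst ρ) + ε * Fintype.card n₂ := by fun_prop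
    have ht := (hc.tendsto 0).mono_left (nhdsWithin_le_nhds (s := Set.Ioi (0:ℝ)))
    simp only [zero_mul, add_zero] at ht
    refine ge_of_tendsto ht (hev.mono fun ε hε => ?_)
    exact aux_concave τ hτpsd n hn0 hτ1 hn1 _ (aux_ptF_psd ρ hρ) (by rw [aux_ptF_tr, hρtr]) hsum ε hε
end

section
/- If a partition of unity has small traces, the classical entropy dominates the quantum entropy: Let ρ be a density matrix on a finite-dimensional complex Hilbert space H and let P^1,…,P^M be positive semidefinite operators on H with ∑_{α=1}^M P^α = id_H and Tr P^α ≤ 1 for every α. Then S[ρ] ≤ S^cl[ρ], where S^cl[ρ] = ∑_α φ( Tr[P^α ρ] ) with φ(x) = −x ln x (and φ(0)=0). -/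
open Matrix Kronecker Real
open scoped ComplexOrder

lemma aux_concave_s5 {n : Type*} [Fintype n] (w l : n → ℝ) (hw : ∀ i, 0 ≤ w i)
    (hl : ∀ i, 0 ≤ l i) (hs : ∑ i, w i ≤ 1) :
    ∑ i, w i * Real.negMulLog (l i) ≤ Real.negMulLog (∑ i, w i * l i) := by
  have hnn : ∀ i, 0 ≤ w i * l i := fun i => mul_nonneg (hw i) (hl i)
  have ht0 : 0 ≤ ∑ i, w i * l i := Finset.sum_nonneg fun i _ => hnn i
  obtain ⟨t, ht⟩ : ∃ t, t = ∑ i, w i * l i := ⟨_, rfl⟩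
  rw [← ht] at ht0 ⊢
  rcases ht0.eq_or_lt with h | h
  · rw [← h] at ht ⊢
    have hz := (Finset.sum_eq_zero_iff_of_nonneg (fun i _ => hnn i)).1 ht.symm
    rw [Real.negMulLog_zero]
    refine le_of_eq (Finset.sum_eq_zero fun i hi => ?_)
    have := hz i hi
    simp only [Real.negMulLog]
    linear_combination (-Real.log (l i)) * this
  · have key : ∀ i, Real.negMulLog (l i) ≤ t - l i - l i * Real.log t := by
      intro i
      have h1 := Real.negMulLog_le_one_sub_self (div_nonneg (hl i) h.le)
      have h2 := Real.negMulLog_mul t (l i / t)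
      rw [mul_div_cancel₀ _ h.ne'] at h2
      have h3 := mul_le_mul_of_nonneg_left h1 h.le
      have h4 : t * (1 - l i / t) = t - l i := by field_simp
      have h5 : l i / t * Real.negMulLog t = - (l i * Real.log t) := by
        simp only [Real.negMulLog]; field_simp
      linarith
    calc ∑ i, w i * Real.negMulLog (l i)
        ≤ ∑ i, w i * (t - l i - l i * Real.log t) :=
          Finset.sum_le_sum fun i _ => mul_le_mul_of_nonneg_left (key i) (hw i)
      _ = (∑ i, w i) * t - t - t * Real.log t := by
          have e : (∑ i, w i) * t - (∑ i, w i * l i) - (∑ i, w i * l i) * Real.log t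
              = ∑ i, w i * (t - l i - l i * Real.log t) := by
            rw [Finset.sum_mul, Finset.sum_mul, ← Finset.sum_sub_distrib,
              ← Finset.sum_sub_distrib]
            exact Finset.sum_congr rfl fun i _ => by ring
          rw [← e, ← ht]
      _ ≤ Real.negMulLog t := by
          simp only [Real.negMulLog]
          nlinarith

/-- If each member of a partition of unity has trace at most one, then the
classical entropy dominates the quantum entropy: `S[ρ] ≤ S^cl[ρ]`. -/
theorem entropy_le_classical_entropy_of_trace_le_one
    {n : Type*} [Fintype n] [DecidableEq n] {M : ℕ}
    (ρ : Matrix n n ℂ) (hρ : ρ.PosSemidef) (hρtr : ρ.trace = 1)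
    (P : Fin M → Matrix n n ℂ) (hP : ∀ α, (P α).PosSemidef)
    (hPsum : ∑ α, P α = 1)
    (hPtr : ∀ α, ((P α).trace).re ≤ 1) :
    entropy ρ ≤ ∑ α, Real.negMulLog (((P α * ρ).trace).re) := by
  have hH := hρ.isHermitian
  rw [entropy, dif_pos hH]
  obtain ⟨U, hU⟩ : ∃ U : Matrix n n ℂ, U = (hH.eigenvectorUnitary : Matrix n n ℂ) := ⟨_, rfl⟩
  have hU1 : Uᴴ * U = 1 := by
    rw [hU]; exact Unitary.coe_star_mul_self hH.eigenvectorUnitary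
  have hU2 : U * Uᴴ = 1 := by
    rw [hU]; exact Unitary.coe_mul_star_self hH.eigenvectorUnitary
  have hsp : ρ = U * diagonal (fun i => (hH.eigenvalues i : ℂ)) * Uᴴ := by
    have := hH.spectral_theorem
    rw [Unitary.conjStarAlgAut_apply] at this
    rw [hU]
    exact this
  obtain ⟨w, hw⟩ : ∃ w : Fin M → n → ℝ, w = fun α i => ((Uᴴ * P α * U) i i).re := ⟨_, rfl⟩
  have hw0 : ∀ α i, 0 ≤ w α i := by
    intro α i
    have := ((hP α).conjTranspose_mul_mul_same U).diag_nonneg (i := i)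
    rw [hw]
    exact (Complex.le_def.1 this).1
  have hws : ∀ α, ∑ i, w α i ≤ 1 := by
    intro α
    have : ∑ i, w α i = ((P α).trace).re := by
      have h : (Uᴴ * P α * U).trace = (P α).trace := by
        rw [Matrix.trace_mul_comm, ← Matrix.mul_assoc, hU2, Matrix.one_mul]
      rw [← h, hw, Matrix.trace, Complex.re_sum]
      rfl
    rw [this]; exact hPtr α
  have hwc : ∀ i, ∑ α, w α i = 1 := by
    intro i
    have h : ∑ α, Uᴴ * P α * U = 1 := by
      rw [← Finset.sum_mul, ← Finset.mul_sum, hPsum, Matrix.mul_one, hU1]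
    have h2 := congrArg (fun A : Matrix n n ℂ => (A i i).re) h
    simp only [Matrix.sum_apply, Complex.re_sum, Matrix.one_apply_eq, Complex.one_re] at h2
    rw [hw]; exact h2
  have hq : ∀ α, ((P α * ρ).trace).re = ∑ i, w α i * hH.eigenvalues i := by
    intro α
    have h : (P α * ρ).trace =
        ((Uᴴ * P α * U) * diagonal (fun i => (hH.eigenvalues i : ℂ))).trace := by
      conv_lhs => rw [hsp]
      rw [← Matrix.mul_assoc, Matrix.trace_mul_comm]
      simp only [Matrix.mul_assoc]
    rw [h, hw, Matrix.trace, Complex.re_sum]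
    refine Finset.sum_congr rfl fun i _ => ?_
    rw [Matrix.diag_apply, Matrix.mul_diagonal, Complex.re_mul_ofReal]
  calc ∑ i, Real.negMulLog (hH.eigenvalues i)
      = ∑ i, ∑ α, w α i * Real.negMulLog (hH.eigenvalues i) := by
        refine Finset.sum_congr rfl fun i _ => ?_
        rw [← Finset.sum_mul, hwc, one_mul]
    _ = ∑ α, ∑ i, w α i * Real.negMulLog (hH.eigenvalues i) := Finset.sum_comm
    _ ≤ _ := by
        refine Finset.sum_le_sum fun α _ => ?_
        rw [hq]
        exact aux_concave_s5 _ _ (hw0 α) hρ.eigenvalues_nonneg (hws α)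
end
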